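/- Fix a Hamiltonian H as in the context. For each n ≥ 1 let S_n ≤ 0 and τ_n ∈ ℝ be real numbers and let z_n : [S_n,∞)×ℝ → D be a C^∞ map satisfying: z_n(s,t+n) = z_n(s,t) for all (s,t); the Floer equation ∂_s z_n(s,t) + i·(∂_t z_n(s,t) − X_H(t+τ_n, z_n(s,t))) = 0 for all (s,t); and the boundary condition |z_n(S_n,t)| = 1 for all t. Assume the Floer energies E_n := (1/2)·∫_{S_n}^∞ ∫_0^n |∂_s z_n|² + |∂_t z_n − X_H(t+τ_n, z_n)|² dt ds converge to 0 as n → ∞. Then there is a constant C ∈ (0,∞) such that |∂_s z_n(s,t)| ≤ C and |∂_t z_n(s,t)| ≤ C for all n ≥ 1 and all (s,t) ∈ [S_n,∞)×ℝ. -/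

import Mathlib

open Complex Set MeasureTheory ENNReal Filter

def Disk : Set ℂ := Metric.closedBall 0 1

/-- The Hamiltonian vector field `X_H(t,z) = (−∂_y H, ∂_x H)`, written in complex
notation as `i · (∂_x H + i ∂_y H)`. -/
noncomputable def XH (H : ℝ → ℂ → ℝ) (t : ℝ) (w : ℂ) : ℂ :=
  Complex.I * ((fderiv ℝ (H t) w 1 : ℝ) + (fderiv ℝ (H t) w Complex.I : ℝ) * Complex.I)

/-- Admissible Hamiltonians: smooth, 1-periodic in time, constant on the boundary circle. -/
structure IsAdmissible (H : ℝ → ℂ → ℝ) : Prop where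
  smooth : ContDiff ℝ (⊤ : ℕ∞) (fun p : ℝ × ℂ => H p.1 p.2)
  periodic : ∀ (t : ℝ) (z : ℂ), H (t + 1) z = H t z
  bdry_const : ∀ (t : ℝ), ∀ z w : ℂ, ‖z‖ = 1 → ‖w‖ = 1 → H t z = H t w

/-- The half plane `[S,∞) × ℝ`. -/
def HalfPlaneFrom (S : ℝ) : Set (ℝ × ℝ) := Set.Ici S ×ˢ Set.univ

/-- Partial derivative in the `s`-direction, taken within a set `A`. -/
noncomputable def pds {E : Type*} [NormedAddCommGroup E] [NormedSpace ℝ E]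
    (A : Set (ℝ × ℝ)) (f : ℝ × ℝ → E) (p : ℝ × ℝ) : E :=
  fderivWithin ℝ f A p (1, 0)

/-- Partial derivative in the `t`-direction, taken within a set `A`. -/
noncomputable def pdt {E : Type*} [NormedAddCommGroup E] [NormedSpace ℝ E]
    (A : Set (ℝ × ℝ)) (f : ℝ × ℝ → E) (p : ℝ × ℝ) : E :=
  fderivWithin ℝ f A p (0, 1)

/-- The Floer energy of `z : [S,∞) × ℝ → D`, periodic of period `n`:
`(1/2) ∫_S^∞ ∫_0^n |∂_s z|² + |∂_t z − X_H(t+τ₀, z)|² dt ds`. -/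
noncomputable def floerEnergyFrom (H : ℝ → ℂ → ℝ) (S : ℝ) (n : ℕ) (τ₀ : ℝ)
    (z : ℝ × ℝ → ℂ) : ℝ≥0∞ :=
  (1/2 : ℝ≥0∞) *
    ∫⁻ p in Set.Ici S ×ˢ Set.Ioc (0:ℝ) (n:ℝ),
      ENNReal.ofReal (‖pds (HalfPlaneFrom S) z p‖ ^ 2 +
        ‖pdt (HalfPlaneFrom S) z p - XH H (p.2 + τ₀) (z p)‖ ^ 2)

/-
Where `z` stays away from the origin, the reflection `z ↦ 1 / conj z` in the unit circle extends a
solution across the boundary. The boundary condition on `H` makes the zeroth order term of the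
equation continuous, indeed Lipschitz, across the boundary, so that the extended map solves a
semilinear Cauchy–Riemann equation and the interior gradient estimate gives a bound independent of
`n` up to the boundary. If instead `z` comes close to the origin at distance `d ≤ 1` from the
boundary, the interior estimate, applied at scale `d`, keeps it there along a vertical segment of
length comparable to `d`; the horizontal segments joining this one to the boundary then carry an
amount of energy that does not depend on `d`. Small energy excludes this, and each of the finitely
many remaining solutions has bounded gradient by periodicity.
-/

open scoped Topology ComplexConjugate

section CauchyRiemann

variable {E : Type*} [NormedAddCommGroup E] [NormedSpace ℂ E]

/-- The Cauchy–Riemann operator on real differentials, normalised as `∂_s u + i ∂_t u` (which is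
twice the Wirtinger derivative `∂̄u`), so that the Floer equation prescribes it. -/
noncomputable def cauchyRiemann (T : ℂ →L[ℝ] E) : E := T 1 + I • T I

/-- The complex linear part of a real differential, that is the Wirtinger derivative
`∂u = (∂_s u - i ∂_t u) / 2`. -/
noncomputable def wirtingerDeriv (T : ℂ →L[ℝ] E) : E := (1 / 2 : ℂ) • (T 1 - I • T I)

lemma cauchyRiemann_sub (S T : ℂ →L[ℝ] E) :
    cauchyRiemann (S - T) = cauchyRiemann S - cauchyRiemann T := by
  simp only [cauchyRiemann, sub_apply, smul_sub]
  abel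

lemma cauchyRiemann_smulRight_conj (B : E) :
    cauchyRiemann ((conjCLE : ℂ →L[ℝ] ℂ).smulRight B) = (2 : ℂ) • B := by
  simp [cauchyRiemann, smul_smul, two_smul]

lemma cauchyRiemann_smul_add_smulRight (a b : ℂ) (T : ℂ →L[ℝ] E) (v : E) :
    cauchyRiemann (a • T + (b • (1 : ℂ →L[ℝ] ℂ)).smulRight v) = a • cauchyRiemann T := by
  simp only [cauchyRiemann, add_apply, smul_apply, ContinuousLinearMap.smulRight_apply,
    one_apply_eq_self, smul_eq_mul]
  match_scalars
  · ring
  · linear_combination b * I_sq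
  · ring

lemma apply_eq_smul_wirtingerDeriv_add (T : ℂ →L[ℝ] E) (c : ℂ) :
    T c = c • wirtingerDeriv T + (conj c / 2) • cauchyRiemann T := by
  have hc : c = c.re • (1 : ℂ) + c.im • I := by simp
  have hT : T c = (c.re : ℂ) • T 1 + (c.im : ℂ) • T I := by
    conv_lhs => rw [hc, map_add, map_smul, map_smul]
    simp only [Complex.coe_smul]
  have hconj : conj c = c.re - c.im * I := by
    apply Complex.ext <;> simp
  rw [hT, cauchyRiemann, wirtingerDeriv, hconj]
  conv_rhs => rw [← re_add_im c]
  simp only [add_re, ofReal_re, mul_re, I_re, I_im, ofReal_im, add_im, mul_im]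
  match_scalars
  · ring
  · linear_combination (c.im : ℂ) * I_sq

lemma norm_le_norm_wirtingerDeriv_add (T : ℂ →L[ℝ] E) :
    ‖T‖ ≤ ‖wirtingerDeriv T‖ + ‖cauchyRiemann T‖ / 2 := by
  refine T.opNorm_le_bound (by positivity) fun c ↦ ?_
  rw [apply_eq_smul_wirtingerDeriv_add T c]
  refine (norm_add_le _ _).trans_eq ?_
  rw [norm_smul, norm_smul, norm_div, RCLike.norm_conj, RCLike.norm_ofNat]
  ring

lemma cauchyRiemann_comp_smul_one (T : ℂ →L[ℝ] E) (c : ℂ) :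
    cauchyRiemann (T.comp (c • (1 : ℂ →L[ℝ] ℂ))) = conj c • cauchyRiemann T := by
  have h1 := apply_eq_smul_wirtingerDeriv_add T c
  have hI := apply_eq_smul_wirtingerDeriv_add T (c * I)
  simp only [map_mul, conj_I] at hI
  simp only [cauchyRiemann, ContinuousLinearMap.comp_apply, smul_apply,
    one_apply_eq_self, smul_eq_mul, mul_one] at h1 hI ⊢
  rw [h1, hI]
  match_scalars
  · linear_combination c * I_sq
  · ring_nf
    linear_combination (-(1 / 2) * conj c) * I_sq
  · ring_nf
    linear_combination (-(1 / 2) * conj c * I) * I_sq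

variable {f : ℂ → E} {f' : ℂ → ℂ →L[ℝ] E} {c : ℂ} {r R L : ℝ}

lemma integral_circleMap_exp_sub [CompleteSpace E] {a b : ℝ} (hab : a ≤ b)
    (hf : ∀ x ∈ Metric.closedBall c (Real.exp b) \ Metric.ball c (Real.exp a),
      HasFDerivAt f (f' x) x)
    (hcont : ContinuousOn (fun x ↦ cauchyRiemann (f' x))
      (Metric.closedBall c (Real.exp b) \ Metric.ball c (Real.exp a))) :
    (∫ θ in 0..2 * Real.pi, f (circleMap c (Real.exp b) θ)) -
        ∫ θ in 0..2 * Real.pi, f (circleMap c (Real.exp a) θ) =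
      ∫ x in a..b, ∫ θ in 0..2 * Real.pi,
        conj (exp (x + θ * I)) • cauchyRiemann (f' (c + exp (x + θ * I))) := by
  set Q : Set ℂ := uIcc a b ×ℂ uIcc 0 (2 * Real.pi)
  set F' : ℂ → ℂ →L[ℝ] E := fun ξ ↦ (f' (c + exp ξ)).comp (exp ξ • (1 : ℂ →L[ℝ] ℂ))
  have hmaps : MapsTo (fun ξ ↦ c + exp ξ) Q
      (Metric.closedBall c (Real.exp b) \ Metric.ball c (Real.exp a)) := by
    rintro ξ ⟨hξ, -⟩
    simpa [dist_eq, norm_exp, hab] using hξ.symm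
  have hF : ∀ ξ ∈ Q, HasFDerivAt (fun ξ ↦ f (c + exp ξ)) (F' ξ) ξ := fun ξ hξ ↦
    (hf _ (hmaps hξ)).comp ξ ((hasDerivAt_exp ξ).const_add c).complexToReal_fderiv
  have hF' : ∀ ξ, I • F' ξ 1 - F' ξ I =
      I • conj (exp ξ) • cauchyRiemann (f' (c + exp ξ)) := by
    intro ξ
    rw [← cauchyRiemann_comp_smul_one, cauchyRiemann, smul_add, smul_smul, I_mul_I, neg_one_smul,
      sub_eq_add_neg]
  have hint : IntegrableOn (fun ξ ↦ I • F' ξ 1 - F' ξ I) Q := by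
    simp only [hF']
    refine ContinuousOn.integrableOn_compact (isCompact_uIcc.reProdIm isCompact_uIcc) ?_
    exact ContinuousOn.const_smul (ContinuousOn.smul (by fun_prop)
      (hcont.comp (by fun_prop) hmaps)) I
  have key := integral_boundary_rect_of_hasFDerivAt_real_off_countable (fun ξ ↦ f (c + exp ξ)) F'
    ⟨a, 0⟩ ⟨b, 2 * Real.pi⟩ ∅ countable_empty
    (fun ξ hξ ↦ (hF ξ hξ).continuousAt.continuousWithinAt)
    (fun ξ hξ ↦ hF ξ ⟨Ioo_subset_Icc_self hξ.1.1, Ioo_subset_Icc_self hξ.1.2⟩) hint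
  simp only [hF', intervalIntegral.integral_smul] at key
  simpa [circleMap, exp_periodic _, exp_add, ← smul_sub] using key

lemma norm_circleAverage_sub_circleAverage_le [CompleteSpace E] (hr : 0 < r) (hrR : r ≤ R)
    (hf : ∀ x ∈ Metric.closedBall c R \ Metric.ball c r, HasFDerivAt f (f' x) x)
    (hcont : ContinuousOn (fun x ↦ cauchyRiemann (f' x))
      (Metric.closedBall c R \ Metric.ball c r))
    (hL : ∀ x ∈ Metric.closedBall c R \ Metric.ball c r, ‖cauchyRiemann (f' x)‖ ≤ L) :
    ‖Real.circleAverage f c R - Real.circleAverage f c r‖ ≤ L * (R - r) := by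
  obtain ⟨a, rfl⟩ : ∃ a, Real.exp a = r := ⟨Real.log r, Real.exp_log hr⟩
  obtain ⟨b, rfl⟩ : ∃ b, Real.exp b = R := ⟨Real.log R, Real.exp_log (hr.trans_le hrR)⟩
  rw [Real.exp_le_exp] at hrR
  have hinner : ∀ x ∈ Ioc a b, ‖∫ θ in 0..2 * Real.pi,
      conj (exp (x + θ * I)) • cauchyRiemann (f' (c + exp (x + θ * I)))‖ ≤
        2 * Real.pi * L * Real.exp x := by
    intro x hx
    refine (intervalIntegral.norm_integral_le_of_norm_le_const (C := Real.exp x * L)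
      fun θ _ ↦ ?_).trans_eq ?_
    · have hmem : c + exp (x + θ * I) ∈
          Metric.closedBall c (Real.exp b) \ Metric.ball c (Real.exp a) := by
        simpa [dist_eq, norm_exp] using hx.symm.imp_right le_of_lt
      rw [norm_smul, RCLike.norm_conj, norm_exp, add_re, ofReal_re, re_ofReal_mul, I_re, mul_zero,
        add_zero]
      exact mul_le_mul_of_nonneg_left (hL _ hmem) (Real.exp_pos x).le
    · rw [sub_zero, abs_of_pos Real.two_pi_pos]
      ring
  rw [Real.circleAverage_def, Real.circleAverage_def, ← smul_sub,
    integral_circleMap_exp_sub hrR hf hcont, norm_smul, norm_inv,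
    Real.norm_of_nonneg Real.two_pi_pos.le, inv_mul_le_iff₀ Real.two_pi_pos]
  refine (intervalIntegral.norm_integral_le_of_norm_le hrR
    (ae_of_all _ hinner)
    (Continuous.intervalIntegrable (by fun_prop) a b)).trans_eq ?_
  rw [intervalIntegral.integral_const_mul, integral_exp]
  ring

lemma norm_circleAverage_sub_le [CompleteSpace E] (hR : 0 < R)
    (hfc : ContinuousOn f (Metric.closedBall c R))
    (hf : ∀ x ∈ Metric.closedBall c R \ {c}, HasFDerivAt f (f' x) x)
    (hcont : ContinuousOn (fun x ↦ cauchyRiemann (f' x)) (Metric.closedBall c R \ {c}))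
    (hL : ∀ x ∈ Metric.closedBall c R \ {c}, ‖cauchyRiemann (f' x)‖ ≤ L) :
    ‖Real.circleAverage f c R - f c‖ ≤ L * R := by
  have hsub : ∀ {r : ℝ}, 0 < r →
      Metric.closedBall c R \ Metric.ball c r ⊆ Metric.closedBall c R \ {c} := fun hr ↦
    sdiff_subset_sdiff_right (singleton_subset_iff.2 (Metric.mem_ball_self hr))
  have hle : ∀ r ∈ Ioc 0 R,
      ‖Real.circleAverage f c R - Real.circleAverage f c r‖ ≤ L * (R - r) := fun r hr ↦
    norm_circleAverage_sub_circleAverage_le hr.1 hr.2 (fun x hx ↦ hf x (hsub hr.1 hx))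
      (hcont.mono (hsub hr.1)) fun x hx ↦ hL x (hsub hr.1 hx)
  have hcA : ContinuousOn (Real.circleAverage f c) (Icc 0 R) := by
    refine Real.ContinuousOn.circleAverage (hfc.mono fun x hx ↦ ?_) fun r hr ↦ hr.1
    exact mem_closedBall_iff_norm.2 hx.2
  have key := ContinuousWithinAt.closure_le (s := Ioc 0 R) (x := 0)
    (f := fun r ↦ ‖Real.circleAverage f c R - Real.circleAverage f c r‖)
    (g := fun r ↦ L * (R - r)) (by rw [closure_Ioc hR.ne]; exact left_mem_Icc.2 hR.le)
    (((hcA 0 (left_mem_Icc.2 hR.le)).mono Ioc_subset_Icc_self).const_sub _).norm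
    (by fun_prop) hle
  simpa using key

lemma norm_circleAverage_le {A : ℝ} (hA : ∀ x ∈ Metric.sphere c |R|, ‖f x‖ ≤ A) :
    ‖Real.circleAverage f c R‖ ≤ A := by
  rw [Real.circleAverage_def, norm_smul, norm_inv, Real.norm_of_nonneg Real.two_pi_pos.le,
    inv_mul_le_iff₀ Real.two_pi_pos]
  refine (intervalIntegral.norm_integral_le_of_norm_le_const
    fun θ _ ↦ hA _ (circleMap_mem_sphere' c R θ)).trans_eq ?_
  rw [sub_zero, abs_of_pos Real.two_pi_pos, mul_comm]

lemma norm_center_le_of_cauchyRiemann_le [CompleteSpace E] {A : ℝ} (hR : 0 < R)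
    (hfc : ContinuousOn f (Metric.closedBall c R))
    (hf : ∀ x ∈ Metric.closedBall c R \ {c}, HasFDerivAt f (f' x) x)
    (hcont : ContinuousOn (fun x ↦ cauchyRiemann (f' x)) (Metric.closedBall c R \ {c}))
    (hL : ∀ x ∈ Metric.closedBall c R \ {c}, ‖cauchyRiemann (f' x)‖ ≤ L)
    (hA : ∀ x ∈ Metric.sphere c R, ‖f x‖ ≤ A) :
    ‖f c‖ ≤ A + L * R := by
  have h1 := norm_circleAverage_sub_le hR hfc hf hcont hL
  have h2 : ‖Real.circleAverage f c R‖ ≤ A := norm_circleAverage_le (by rwa [abs_of_pos hR])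
  linarith [norm_sub_rev (Real.circleAverage f c R) (f c),
    norm_le_norm_add_norm_sub' (f c) (Real.circleAverage f c R)]

lemma hasFDerivAt_sub_conj_smul {T : ℂ →L[ℝ] E} {x : ℂ} (hf : HasFDerivAt f T x) (c : ℂ) (B : E) :
    HasFDerivAt (fun z ↦ f z - conj (z - c) • B) (T - (conjCLE : ℂ →L[ℝ] ℂ).smulRight B) x :=
  hf.sub ((conjCLE.hasFDerivAt.comp x ((hasFDerivAt_id x).sub_const c)).smul_const B)

lemma hasDerivAt_sub_conj_smul_cauchyRiemann {T : ℂ →L[ℝ] E} (hf : HasFDerivAt f T c) :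
    HasDerivAt (fun z ↦ f z - conj (z - c) • (1 / 2 : ℂ) • cauchyRiemann T)
      (wirtingerDeriv T) c := by
  refine hasFDerivAt_of_restrictScalars ℝ (hasFDerivAt_sub_conj_smul hf c _)
    (ContinuousLinearMap.ext fun v ↦ ?_)
  simp [apply_eq_smul_wirtingerDeriv_add T v, smul_smul, div_eq_mul_inv]

lemma hasFDerivAt_dslope_of_ne {T : ℂ →L[ℝ] E} {x : ℂ} (hf : HasFDerivAt f T x) (hx : x ≠ c) :
    HasFDerivAt (dslope f c) ((x - c)⁻¹ • T +
      ((-((x - c) ^ 2)⁻¹) • (1 : ℂ →L[ℝ] ℂ)).smulRight (f x - f c)) x := by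
  have hinv : HasFDerivAt (fun z ↦ (z - c)⁻¹) ((-((x - c) ^ 2)⁻¹) • (1 : ℂ →L[ℝ] ℂ)) x := by
    have h := (((hasDerivAt_id' x).sub_const c).fun_inv (sub_ne_zero.2 hx)).complexToReal_fderiv
    rwa [neg_div, one_div] at h
  exact (hinv.smul (hf.sub_const (f c))).congr_of_eventuallyEq
    (dslope_eventuallyEq_slope_of_ne f hx)

lemma norm_le_of_hasDerivAt_of_cauchyRiemann_le [CompleteSpace E] {A : ℝ} {v : E} (hR : 0 < R)
    (hf : ∀ x ∈ Metric.closedBall c R, HasFDerivAt f (f' x) x)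
    (hcont : ContinuousOn (fun x ↦ cauchyRiemann (f' x)) (Metric.closedBall c R))
    (hL : ∀ x ∈ Metric.closedBall c R, ‖cauchyRiemann (f' x)‖ ≤ L * ‖x - c‖)
    (hA : ∀ x ∈ Metric.sphere c R, ‖f x - f c‖ ≤ A) (hv : HasDerivAt f v c) :
    ‖v‖ ≤ A / R + L * R := by
  have hslope := norm_center_le_of_cauchyRiemann_le (f := dslope f c) (A := A / R) (L := L)
    hR ((continuousOn_dslope (Metric.closedBall_mem_nhds c hR)).2
      ⟨fun x hx ↦ (hf x hx).continuousAt.continuousWithinAt, hv.differentiableAt⟩)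
    (fun x hx ↦ hasFDerivAt_dslope_of_ne (hf x hx.1) hx.2)
  simp only [cauchyRiemann_smul_add_smulRight, dslope_same, hv.deriv] at hslope
  refine hslope ?_ ?_ ?_
  · exact ContinuousOn.smul (ContinuousOn.inv₀ (by fun_prop) fun x hx ↦ sub_ne_zero.2 hx.2)
      (hcont.mono sdiff_subset)
  · intro x hx
    rw [norm_smul, norm_inv, inv_mul_le_iff₀ (norm_pos_iff.2 (sub_ne_zero.2 hx.2)), mul_comm]
    exact hL x hx.1
  · intro x hx
    rw [dslope_of_ne _ (Metric.ne_of_mem_sphere hx hR.ne'), slope_def_module, norm_smul, norm_inv,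
      mem_sphere_iff_norm.1 hx, inv_mul_le_iff₀ hR, mul_div_cancel₀ _ hR.ne']
    exact hA x hx

/- After subtracting the antiholomorphic part of its linearisation at `c`, the function `f` is
complex differentiable at `c`, with derivative `wirtingerDeriv (f' c)`. -/
lemma norm_wirtingerDeriv_le_of_cauchyRiemann_lipschitz [CompleteSpace E] {A : ℝ} (hR : 0 < R)
    (hf : ∀ x ∈ Metric.closedBall c R, HasFDerivAt f (f' x) x)
    (hcont : ContinuousOn (fun x ↦ cauchyRiemann (f' x)) (Metric.closedBall c R))
    (hL : ∀ x ∈ Metric.closedBall c R,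
      ‖cauchyRiemann (f' x) - cauchyRiemann (f' c)‖ ≤ L * ‖x - c‖)
    (hA : ∀ x ∈ Metric.sphere c R, ‖f x - f c‖ ≤ A) :
    ‖wirtingerDeriv (f' c)‖ ≤ A / R + ‖cauchyRiemann (f' c)‖ / 2 + L * R := by
  set B : E := (1 / 2 : ℂ) • cauchyRiemann (f' c) with hB
  have hBnorm : ‖B‖ = ‖cauchyRiemann (f' c)‖ / 2 := by
    rw [hB, norm_smul, norm_div, norm_one, RCLike.norm_ofNat, one_div_mul_eq_div]
  have hCR : ∀ x, cauchyRiemann (f' x - (conjCLE : ℂ →L[ℝ] ℂ).smulRight B) =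
      cauchyRiemann (f' x) - cauchyRiemann (f' c) := fun x ↦ by
    rw [cauchyRiemann_sub, cauchyRiemann_smulRight_conj, hB, smul_smul,
      mul_one_div_cancel two_ne_zero, one_smul]
  have hderiv := norm_le_of_hasDerivAt_of_cauchyRiemann_le (A := A + ‖B‖ * R) (L := L) hR
    (fun x hx ↦ hasFDerivAt_sub_conj_smul (hf x hx) c B)
    (by simpa only [hCR] using hcont.fun_sub continuousOn_const) (by simpa only [hCR] using hL)
    (fun x hx ↦ ?_)
    (hasDerivAt_sub_conj_smul_cauchyRiemann (hf c (Metric.mem_closedBall_self hR.le)))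
  · rwa [add_div, mul_div_cancel_right₀ _ hR.ne', hBnorm] at hderiv
  rw [sub_self, map_zero, zero_smul, sub_zero, sub_right_comm]
  refine (norm_sub_le _ _).trans (add_le_add (hA x hx) ?_)
  rw [norm_smul, RCLike.norm_conj, mem_sphere_iff_norm.1 hx, mul_comm]

lemma norm_le_of_cauchyRiemann_lipschitz [CompleteSpace E] {A : ℝ} (hR : 0 < R)
    (hf : ∀ x ∈ Metric.closedBall c R, HasFDerivAt f (f' x) x)
    (hcont : ContinuousOn (fun x ↦ cauchyRiemann (f' x)) (Metric.closedBall c R))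
    (hL : ∀ x ∈ Metric.closedBall c R,
      ‖cauchyRiemann (f' x) - cauchyRiemann (f' c)‖ ≤ L * ‖x - c‖)
    (hA : ∀ x ∈ Metric.sphere c R, ‖f x - f c‖ ≤ A) :
    ‖f' c‖ ≤ A / R + L * R + ‖cauchyRiemann (f' c)‖ := by
  linarith [norm_le_norm_wirtingerDeriv_add (f' c),
    norm_wirtingerDeriv_le_of_cauchyRiemann_lipschitz hR hf hcont hL hA]

end CauchyRiemann

section InteriorEstimate

variable {E : Type*} [NormedAddCommGroup E] [NormedSpace ℂ E]

/-- `u` is a bounded solution on `s`, with differential `u'`, of a semilinear Cauchy–Riemann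
equation `∂_s u + i ∂_t u = G(x, u)`. Only what the estimates use about the right-hand side is
recorded: it is bounded by `K`, and it is Lipschitz in `(x, u)` with constant `Λ`. -/
structure IsSemilinearCROn (A K Λ : ℝ) (u : ℂ → E) (u' : ℂ → ℂ →L[ℝ] E) (s : Set ℂ) : Prop where
  hasFDerivAt : ∀ x ∈ s, HasFDerivAt u (u' x) x
  continuousOn : ContinuousOn u' s
  norm_le : ∀ x ∈ s, ‖u x‖ ≤ A
  norm_cauchyRiemann_le : ∀ x ∈ s, ‖cauchyRiemann (u' x)‖ ≤ K
  norm_cauchyRiemann_sub_le : ∀ x ∈ s, ∀ y ∈ s,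
    ‖cauchyRiemann (u' x) - cauchyRiemann (u' y)‖ ≤ Λ * (‖x - y‖ + ‖u x - u y‖)

/-- The constant of the interior gradient estimate for semilinear Cauchy–Riemann equations. -/
noncomputable def gradientConst (A K Λ : ℝ) : ℝ := 8 * A * (1 + 2 * Λ) + 2 * K + 1

lemma one_le_gradientConst {A K Λ : ℝ} (hA : 0 ≤ A) (hK : 0 ≤ K) (hΛ : 0 ≤ Λ) :
    1 ≤ gradientConst A K Λ :=
  le_add_of_nonneg_left (by positivity)

lemma gradientConst_pos {A K Λ : ℝ} (hA : 0 ≤ A) (hK : 0 ≤ K) (hΛ : 0 ≤ Λ) :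
    0 < gradientConst A K Λ :=
  one_pos.trans_le (one_le_gradientConst hA hK hΛ)

variable {A K Λ : ℝ} {u : ℂ → E} {u' : ℂ → ℂ →L[ℝ] E} {s : Set ℂ}

namespace IsSemilinearCROn

lemma mono (h : IsSemilinearCROn A K Λ u u' s) {t : Set ℂ} (hts : t ⊆ s) :
    IsSemilinearCROn A K Λ u u' t where
  hasFDerivAt x hx := h.hasFDerivAt x (hts hx)
  continuousOn := h.continuousOn.mono hts
  norm_le x hx := h.norm_le x (hts hx)
  norm_cauchyRiemann_le x hx := h.norm_cauchyRiemann_le x (hts hx)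
  norm_cauchyRiemann_sub_le x hx y hy := h.norm_cauchyRiemann_sub_le x (hts hx) y (hts hy)

lemma norm_cauchyRiemann_sub_center_le {p x : ℂ} {r B : ℝ} (hΛ : 0 ≤ Λ)
    (h : IsSemilinearCROn A K Λ u u' (Metric.closedBall p r))
    (hB : ∀ x ∈ Metric.closedBall p r, ‖u' x‖ ≤ B) (hx : x ∈ Metric.closedBall p r) :
    ‖cauchyRiemann (u' x) - cauchyRiemann (u' p)‖ ≤ Λ * (1 + B) * ‖x - p‖ := by
  have hp : p ∈ Metric.closedBall p r :=
    Metric.mem_closedBall_self (dist_nonneg.trans (Metric.mem_closedBall.1 hx))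
  have hlip : ‖u x - u p‖ ≤ B * ‖x - p‖ :=
    (convex_closedBall p r).norm_image_sub_le_of_norm_hasFDerivWithin_le
      (fun y hy ↦ (h.hasFDerivAt y hy).hasFDerivWithinAt) hB hp hx
  calc _ ≤ Λ * (‖x - p‖ + ‖u x - u p‖) := h.norm_cauchyRiemann_sub_le x hx p hp
    _ ≤ Λ * (‖x - p‖ + B * ‖x - p‖) := by gcongr
    _ = Λ * (1 + B) * ‖x - p‖ := by ring

lemma mul_norm_le_gradientConst_of_doubling [CompleteSpace E] {p : ℂ} {d : ℝ} (hd : 0 < d)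
    (hd1 : d ≤ 1) (hΛ : 0 ≤ Λ) (h : IsSemilinearCROn A K Λ u u' (Metric.closedBall p (d / 2)))
    (hdouble : ∀ x ∈ Metric.closedBall p (d / 2), ‖u' x‖ ≤ 2 * ‖u' p‖) :
    d * ‖u' p‖ ≤ gradientConst A K Λ := by
  -- The radius is chosen so that the term `L * r` below absorbs half of the left-hand side.
  set r : ℝ := d / (2 + 4 * Λ)
  have hr0 : 0 < r := by positivity
  have hrd : r * (2 + 4 * Λ) = d := div_mul_cancel₀ _ (by positivity)
  have hsub : Metric.closedBall p r ⊆ Metric.closedBall p (d / 2) :=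
    Metric.closedBall_subset_closedBall (by nlinarith)
  have hr' := h.mono hsub
  have hp : p ∈ Metric.closedBall p r := Metric.mem_closedBall_self hr0.le
  have hcont : ContinuousOn (fun x ↦ cauchyRiemann (u' x)) (Metric.closedBall p r) := by
    have := hr'.continuousOn
    unfold cauchyRiemann
    fun_prop
  have hosc : ∀ x ∈ Metric.sphere p r, ‖u x - u p‖ ≤ 2 * A := fun x hx ↦
    (norm_sub_le _ _).trans (by
      linarith [hr'.norm_le x (Metric.sphere_subset_closedBall hx), hr'.norm_le p hp])
  have hmain := norm_le_of_cauchyRiemann_lipschitz hr0 hr'.hasFDerivAt hcont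
    (fun x hx ↦ hr'.norm_cauchyRiemann_sub_center_le hΛ (fun y hy ↦ hdouble y (hsub hy)) hx) hosc
  have hΛr : Λ * r ≤ d / 4 := by nlinarith
  have hK := h.norm_cauchyRiemann_le p (hsub hp)
  have hquad : Λ * (1 + 2 * ‖u' p‖) * r ≤ (1 + 2 * ‖u' p‖) / 4 := by
    nlinarith [hΛr, norm_nonneg (u' p)]
  have hle : d * ‖u' p‖ ≤ 4 * A * (1 + 2 * Λ) + 1 / 4 + d * ‖u' p‖ / 2 + K := calc
    d * ‖u' p‖ ≤ d * (2 * A / r + (1 + 2 * ‖u' p‖) / 4 + K) := by gcongr; linarith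
    _ = 4 * A * (1 + 2 * Λ) + d / 4 + d * ‖u' p‖ / 2 + d * K := by
        rw [← hrd]
        field_simp
        ring
    _ ≤ 4 * A * (1 + 2 * Λ) + 1 / 4 + d * ‖u' p‖ / 2 + K := by
        nlinarith [norm_nonneg (cauchyRiemann (u' p))]
  unfold gradientConst
  linarith

theorem norm_le_gradientConst_div [CompleteSpace E] {p : ℂ} {R : ℝ} (hR : 0 < R) (hR1 : R ≤ 1)
    (hΛ : 0 ≤ Λ) (h : IsSemilinearCROn A K Λ u u' (Metric.closedBall p R)) :
    ‖u' p‖ ≤ gradientConst A K Λ / R := by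
  have hp : p ∈ Metric.closedBall p R := Metric.mem_closedBall_self hR.le
  obtain ⟨q, hq, hmax⟩ := (isCompact_closedBall p R).exists_isMaxOn ⟨p, hp⟩
    (f := fun x ↦ (R - ‖x - p‖) * ‖u' x‖)
    ((continuousOn_const.sub (by fun_prop)).mul h.continuousOn.norm)
  have hq' : ‖q - p‖ ≤ R := mem_closedBall_iff_norm.1 hq
  rw [le_div_iff₀' hR]
  have hpq : R * ‖u' p‖ ≤ (R - ‖q - p‖) * ‖u' q‖ := by simpa using hmax hp
  refine hpq.trans ?_
  rcases hq'.eq_or_lt with hqR | hqR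
  · have hA := (norm_nonneg _).trans (h.norm_le p hp)
    have hK := (norm_nonneg _).trans (h.norm_cauchyRiemann_le p hp)
    rw [hqR, sub_self, zero_mul, gradientConst]
    positivity
  have hball : ∀ x ∈ Metric.closedBall q ((R - ‖q - p‖) / 2),
      (R - ‖q - p‖) / 2 ≤ R - ‖x - p‖ := fun x hx ↦ by
    linarith [norm_sub_le_norm_sub_add_norm_sub x q p, mem_closedBall_iff_norm.1 hx]
  have hsub : Metric.closedBall q ((R - ‖q - p‖) / 2) ⊆ Metric.closedBall p R := fun x hx ↦
    mem_closedBall_iff_norm.2 (by linarith [hball x hx])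
  refine (h.mono hsub).mul_norm_le_gradientConst_of_doubling (sub_pos.2 hqR)
    (by linarith [norm_nonneg (q - p)]) hΛ fun x hx ↦ ?_
  have hxq : (R - ‖x - p‖) * ‖u' x‖ ≤ (R - ‖q - p‖) * ‖u' q‖ := hmax (hsub hx)
  nlinarith [mul_le_mul_of_nonneg_right (hball x hx) (norm_nonneg (u' x))]

end IsSemilinearCROn

end InteriorEstimate

section Reflection

/-- Right-hand sides `G = i X` of Floer's equation on the unit disk: bounded by `K`, Lipschitz in
time and space with constant `Λ`. On the unit circle the vector field `X` is tangent, hence `G`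
is radial; `radial` says that `G t w / w` is real. -/
structure IsFloerField (K Λ : ℝ) (G : ℝ → ℂ → ℂ) : Prop where
  norm_le : ∀ t w, ‖w‖ ≤ 1 → ‖G t w‖ ≤ K
  norm_sub_le : ∀ t t' w w', ‖w‖ ≤ 1 → ‖w'‖ ≤ 1 →
    ‖G t w - G t' w'‖ ≤ Λ * (|t - t'| + ‖w - w'‖)
  radial : ∀ t w, ‖w‖ = 1 → w ^ 2 * conj (G t w) = G t w

/-- The extension of a field `G` from the unit disk to the plane by reflection across the unit
circle: if `u` solves `∂_s u + i ∂_t u = G(t, u)`, then `1 / conj (u (- conj x))` solves the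
equation with this right-hand side. -/
noncomputable def reflectedField (G : ℝ → ℂ → ℂ) (t : ℝ) (w : ℂ) : ℂ :=
  if ‖w‖ ≤ 1 then G t w else w ^ 2 * conj (G t (conj w)⁻¹)

lemma norm_inv_conj (w : ℂ) : ‖(conj w)⁻¹‖ = ‖w‖⁻¹ := by
  rw [norm_inv, RCLike.norm_conj]

lemma inv_conj_eq_self {w : ℂ} (hw : ‖w‖ = 1) : (conj w)⁻¹ = w := by
  rw [← map_inv₀, inv_eq_conj hw, conj_conj]

lemma norm_inv_conj_sub_le {w v : ℂ} (hw : 1 ≤ ‖w‖) (hv : 1 ≤ ‖v‖) :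
    ‖(conj w)⁻¹ - (conj v)⁻¹‖ ≤ ‖w - v‖ := by
  have hw0 : conj w ≠ 0 := (map_ne_zero _).2 (norm_pos_iff.1 (by linarith))
  have hv0 : conj v ≠ 0 := (map_ne_zero _).2 (norm_pos_iff.1 (by linarith))
  rw [← dist_eq_norm, dist_inv_inv₀ hw0 hv0, dist_eq_norm, ← map_sub, RCLike.norm_conj,
    RCLike.norm_conj, RCLike.norm_conj]
  exact div_le_self (norm_nonneg _) (one_le_mul_of_one_le_of_one_le hw hv)

lemma norm_sq_mul_conj_sub_le {a b w v : ℂ} {K : ℝ} (hw : ‖w‖ ≤ 2) (hv : ‖v‖ ≤ 2)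
    (ha : ‖a‖ ≤ K) : ‖w ^ 2 * conj a - v ^ 2 * conj b‖ ≤ 4 * K * ‖w - v‖ + 4 * ‖a - b‖ := by
  have hsplit : w ^ 2 * conj a - v ^ 2 * conj b =
      (w + v) * (w - v) * conj a + v ^ 2 * conj (a - b) := by
    rw [map_sub]
    ring
  have hsum : ‖w + v‖ ≤ 4 := (norm_add_le w v).trans (by linarith)
  have hsq : ‖v‖ ^ 2 ≤ 4 := by nlinarith [norm_nonneg v]
  rw [hsplit]
  refine (norm_add_le _ _).trans ?_
  rw [norm_mul, norm_mul, norm_mul, norm_pow, RCLike.norm_conj, RCLike.norm_conj]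
  calc _ ≤ 4 * ‖w - v‖ * K + 4 * ‖a - b‖ := by gcongr
    _ = _ := by ring

namespace IsFloerField

variable {K Λ : ℝ} {G : ℝ → ℂ → ℂ}

lemma bound_nonneg (hG : IsFloerField K Λ G) : 0 ≤ K :=
  (norm_nonneg _).trans (hG.norm_le 0 0 (by simp))

lemma lipschitz_nonneg (hG : IsFloerField K Λ G) : 0 ≤ Λ := by
  simpa using (norm_nonneg _).trans (hG.norm_sub_le 0 1 0 0 (by simp) (by simp))

lemma reflectedField_of_norm_le_one {t : ℝ} {w : ℂ} (hw : ‖w‖ ≤ 1) :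
    reflectedField G t w = G t w := if_pos hw

lemma reflectedField_of_one_le_norm (hG : IsFloerField K Λ G) {t : ℝ} {w : ℂ} (hw : 1 ≤ ‖w‖) :
    reflectedField G t w = w ^ 2 * conj (G t (conj w)⁻¹) := by
  rcases hw.eq_or_lt with hw | hw
  · rw [reflectedField, if_pos hw.ge, inv_conj_eq_self hw.symm, hG.radial t w hw.symm]
  · exact if_neg hw.not_ge

lemma norm_reflectedField_le (hG : IsFloerField K Λ G) {t : ℝ} {w : ℂ} (hw : ‖w‖ ≤ 2) :
    ‖reflectedField G t w‖ ≤ 4 * K := by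
  have hK := hG.bound_nonneg
  rcases le_total ‖w‖ 1 with hw1 | hw1
  · rw [reflectedField_of_norm_le_one hw1]
    linarith [hG.norm_le t w hw1]
  · rw [hG.reflectedField_of_one_le_norm hw1, norm_mul, norm_pow, RCLike.norm_conj]
    have hsq : ‖w‖ ^ 2 ≤ 4 := by nlinarith
    gcongr
    exact hG.norm_le _ _ (by rw [norm_inv_conj]; exact inv_le_one_of_one_le₀ hw1)

lemma norm_reflectedField_sub_le_of_one_le (hG : IsFloerField K Λ G) {t t' : ℝ} {w w' : ℂ}
    (hw : ‖w‖ ∈ Icc 1 2) (hw' : ‖w'‖ ∈ Icc 1 2) :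
    ‖reflectedField G t w - reflectedField G t' w'‖ ≤
      4 * K * ‖w - w'‖ + 4 * Λ * (|t - t'| + ‖w - w'‖) := by
  have hΛ := hG.lipschitz_nonneg
  have hin : ∀ v : ℂ, ‖v‖ ∈ Icc 1 2 → ‖(conj v)⁻¹‖ ≤ 1 := fun v hv ↦ by
    rw [norm_inv_conj]
    exact inv_le_one_of_one_le₀ hv.1
  rw [hG.reflectedField_of_one_le_norm hw.1, hG.reflectedField_of_one_le_norm hw'.1]
  refine (norm_sq_mul_conj_sub_le hw.2 hw'.2 (hG.norm_le _ _ (hin w hw))).trans ?_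
  rw [mul_assoc 4 Λ]
  gcongr
  refine (hG.norm_sub_le _ _ _ _ (hin w hw) (hin w' hw')).trans ?_
  gcongr
  exact norm_inv_conj_sub_le hw.1 hw'.1

/- A point inside and a point outside the disk are compared through the radial projection of the
latter to the circle. -/
lemma norm_reflectedField_sub_le_of_le_one_of_one_le (hG : IsFloerField K Λ G) {t t' : ℝ}
    {w w' : ℂ} (hw : ‖w‖ ≤ 1) (hw' : ‖w'‖ ∈ Icc 1 2) :
    ‖reflectedField G t w - reflectedField G t' w'‖ ≤
      (4 * K + 6 * Λ) * (|t - t'| + ‖w - w'‖) := by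
  have hK := hG.bound_nonneg
  have hΛ := hG.lipschitz_nonneg
  set q : ℂ := w' / ‖w'‖
  have hq : ‖q‖ = 1 := by
    rw [norm_div, norm_real, norm_norm, div_self (by linarith [hw'.1])]
  have hqw' : ‖q - w'‖ ≤ ‖w - w'‖ := by
    have hw'q : q - w' = ((1 - ‖w'‖ : ℝ) : ℂ) * q := by
      have hw'0 : (‖w'‖ : ℂ) ≠ 0 := ofReal_ne_zero.2 (by linarith [hw'.1])
      simp only [q]
      push_cast
      field_simp
    rw [hw'q, norm_mul, norm_real, hq, mul_one, Real.norm_of_nonpos (by linarith [hw'.1])]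
    linarith [norm_sub_norm_le w' w, norm_sub_rev w' w]
  have hwq : ‖w - q‖ ≤ 2 * ‖w - w'‖ := by
    linarith [norm_sub_le_norm_sub_add_norm_sub w w' q, norm_sub_rev w' q]
  have hin := hG.norm_sub_le t t w q hw hq.le
  have hout := hG.norm_reflectedField_sub_le_of_one_le (t := t) (t' := t') (w := q)
    ⟨hq.ge, hq.trans_le one_le_two⟩ hw'
  rw [reflectedField_of_norm_le_one hq.le] at hout
  rw [reflectedField_of_norm_le_one hw]
  rw [sub_self, abs_zero, zero_add] at hin
  calc _ ≤ ‖G t w - G t q‖ + ‖G t q - reflectedField G t' w'‖ :=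
        norm_sub_le_norm_sub_add_norm_sub _ _ _
    _ ≤ Λ * (2 * ‖w - w'‖) +
        (4 * K * ‖w - w'‖ + 4 * Λ * (|t - t'| + ‖w - w'‖)) := by
        refine add_le_add (hin.trans (by gcongr)) (hout.trans (by gcongr))
    _ ≤ (4 * K + 6 * Λ) * (|t - t'| + ‖w - w'‖) := by
        nlinarith [mul_nonneg hK (abs_nonneg (t - t')), mul_nonneg hΛ (abs_nonneg (t - t'))]

lemma norm_reflectedField_sub_le (hG : IsFloerField K Λ G) {t t' : ℝ} {w w' : ℂ}
    (hw : ‖w‖ ≤ 2) (hw' : ‖w'‖ ≤ 2) :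
    ‖reflectedField G t w - reflectedField G t' w'‖ ≤
      (4 * K + 6 * Λ) * (|t - t'| + ‖w - w'‖) := by
  have hK := hG.bound_nonneg
  have hΛ := hG.lipschitz_nonneg
  rcases le_total ‖w‖ 1 with hw1 | hw1 <;> rcases le_total ‖w'‖ 1 with hw'1 | hw'1
  · rw [reflectedField_of_norm_le_one hw1, reflectedField_of_norm_le_one hw'1]
    refine (hG.norm_sub_le t t' w w' hw1 hw'1).trans ?_
    gcongr
    linarith
  · exact hG.norm_reflectedField_sub_le_of_le_one_of_one_le hw1 ⟨hw'1, hw'⟩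
  · rw [norm_sub_rev, abs_sub_comm, norm_sub_rev w]
    exact hG.norm_reflectedField_sub_le_of_le_one_of_one_le hw'1 ⟨hw1, hw⟩
  · refine (hG.norm_reflectedField_sub_le_of_one_le ⟨hw1, hw⟩ ⟨hw'1, hw'⟩).trans ?_
    nlinarith [mul_nonneg hK (abs_nonneg (t - t')), mul_nonneg hΛ (abs_nonneg (t - t')),
      mul_nonneg hΛ (norm_nonneg (w - w'))]

end IsFloerField

end Reflection

section Gluing

variable {α β : Type*} {s t : Set α} [∀ x, Decidable (x ∈ s)] {f g : α → β}

lemma eqOn_piecewise_right (h : EqOn f g (s ∩ t)) : EqOn (s.piecewise f g) g t := by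
  intro x hx
  by_cases hxs : x ∈ s
  · rw [piecewise_eq_of_mem s f g hxs, h ⟨hxs, hx⟩]
  · exact piecewise_eq_of_notMem s f g hxs

lemma continuousOn_piecewise_union [TopologicalSpace α] [TopologicalSpace β] (hs : IsClosed s)
    (ht : IsClosed t) (hf : ContinuousOn f s) (hg : ContinuousOn g t) (h : EqOn f g (s ∩ t)) :
    ContinuousOn (s.piecewise f g) (s ∪ t) :=
  (hf.congr (piecewise_eqOn s f g)).union_of_isClosed (hg.congr (eqOn_piecewise_right h)) hs ht

lemma hasFDerivWithinAt_piecewise_union {𝕜 E F : Type*} [NontriviallyNormedField 𝕜]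
    [NormedAddCommGroup E] [NormedSpace 𝕜 E] [NormedAddCommGroup F] [NormedSpace 𝕜 F]
    {s t : Set E} [∀ x, Decidable (x ∈ s)] {f g : E → F} {f' g' : E → E →L[𝕜] F}
    (hs : IsClosed s) (ht : IsClosed t) (hf : ∀ x ∈ s, HasFDerivWithinAt f (f' x) s x)
    (hg : ∀ x ∈ t, HasFDerivWithinAt g (g' x) t x) (h : EqOn f g (s ∩ t))
    (h' : EqOn f' g' (s ∩ t)) (x : E) :
    HasFDerivWithinAt (s.piecewise f g) (s.piecewise f' g' x) (s ∪ t) x := by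
  refine HasFDerivWithinAt.union ?_ ?_
  · by_cases hx : x ∈ s
    · rw [piecewise_eq_of_mem s f' g' hx]
      exact HasFDerivWithinAt.congr' (hf x hx) (piecewise_eqOn s f g) hx
    · exact .of_notMem_closure (by rwa [hs.closure_eq])
  · by_cases hx : x ∈ t
    · rw [eqOn_piecewise_right h' hx]
      exact HasFDerivWithinAt.congr' (hg x hx) (eqOn_piecewise_right h) hx
    · exact .of_notMem_closure (by rwa [ht.closure_eq])

end Gluing

section Periodic

lemma exists_bound_of_periodic_of_isCompact {X E : Type*} [TopologicalSpace X]
    [SeminormedAddCommGroup E] {F : ℝ × X → E} {T : ℝ} {s : Set X} (hT : 0 < T) (hs : IsCompact s)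
    (hF : ContinuousOn F (univ ×ˢ s)) (hper : ∀ x ∈ s, Function.Periodic (fun t ↦ F (t, x)) T) :
    ∃ C, ∀ t, ∀ x ∈ s, ‖F (t, x)‖ ≤ C := by
  obtain ⟨C, hC⟩ := (isCompact_Icc.prod hs).exists_bound_of_continuousOn
    (hF.mono (prod_mono (subset_univ (Icc 0 T)) subset_rfl))
  refine ⟨C, fun t x hx ↦ ?_⟩
  obtain ⟨t', ht', htt'⟩ := (hper x hx).exists_mem_Ico₀ hT t
  exact htt' ▸ hC _ ⟨Ico_subset_Icc_self ht', hx⟩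

end Periodic

section HalfPlane

/-- The closed right half-plane, the domain of half-cylinders after the shift `S = 0`. -/
def rightHalfPlane : Set ℂ := {x | 0 ≤ x.re}

noncomputable instance (x : ℂ) : Decidable (x ∈ rightHalfPlane) := Real.decidableLE 0 x.re

/-- The strip to the left of the imaginary axis to which solutions are extended by reflection. -/
def leftStrip : Set ℂ := {x | x.re ∈ Icc (-1) 0}

lemma isClosed_rightHalfPlane : IsClosed rightHalfPlane := isClosed_le (by fun_prop) (by fun_prop)

lemma isClosed_leftStrip : IsClosed leftStrip := isClosed_Icc.preimage continuous_re

lemma mem_rightHalfPlane_of_re_pos {x : ℂ} (hx : 0 < x.re) : x ∈ rightHalfPlane := hx.le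

lemma uniqueDiffOn_rightHalfPlane : UniqueDiffOn ℝ rightHalfPlane :=
  uniqueDiffOn_convex (convex_halfSpace_re_ge 0) ⟨1, mem_interior.2
    ⟨{x | 0 < x.re}, fun _ ↦ mem_rightHalfPlane_of_re_pos,
      isOpen_lt continuous_const continuous_re, by simp⟩⟩

lemma mapsTo_neg_conj_leftStrip : MapsTo (fun x ↦ -conj x) leftStrip rightHalfPlane := fun x hx ↦ by
  simpa [rightHalfPlane] using hx.2

lemma neg_conj_eq_self {x : ℂ} (hx : x.re = 0) : -conj x = x := by
  apply Complex.ext <;> simp [hx]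

lemma rightHalfPlane_inter_leftStrip_re {x : ℂ} (hx : x ∈ rightHalfPlane ∩ leftStrip) :
    x.re = 0 :=
  le_antisymm hx.2.2 hx.1

lemma rightHalfPlane_union_leftStrip_mem_nhds {x : ℂ} (hx : -1 < x.re) :
    rightHalfPlane ∪ leftStrip ∈ 𝓝 x := by
  filter_upwards [(isOpen_lt continuous_const continuous_re).mem_nhds hx] with y hy
  exact (le_total 0 y.re).imp id fun h ↦ ⟨le_of_lt hy, h⟩

/-- The differential at `x` of `x ↦ 1 / conj (u (- conj x))`, where `w` and `T` are the value and
the differential of `u` at `- conj x`. -/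
noncomputable def reflectedDifferential (w : ℂ) (T : ℂ →L[ℝ] ℂ) : ℂ →L[ℝ] ℂ :=
  ((conj w) ^ 2)⁻¹ • (conjCLE : ℂ →L[ℝ] ℂ) ∘L T ∘L (conjCLE : ℂ →L[ℝ] ℂ)

lemma reflectedDifferential_apply (w : ℂ) (T : ℂ →L[ℝ] ℂ) (v : ℂ) :
    reflectedDifferential w T v = ((conj w) ^ 2)⁻¹ * conj (T (conj v)) := rfl

lemma cauchyRiemann_reflectedDifferential (w : ℂ) (T : ℂ →L[ℝ] ℂ) :
    cauchyRiemann (reflectedDifferential w T) = (conj w)⁻¹ ^ 2 * conj (cauchyRiemann T) := by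
  simp only [cauchyRiemann, reflectedDifferential_apply, map_one, conj_I, map_neg, smul_eq_mul,
    map_add, map_mul, inv_pow]
  ring

lemma hasFDerivWithinAt_inv_conj_comp {u : ℂ → ℂ} {T : ℂ →L[ℝ] ℂ} {s t : Set ℂ} {x : ℂ}
    (hu : HasFDerivWithinAt u T s (-conj x)) (hst : MapsTo (fun x ↦ -conj x) t s)
    (hx : u (-conj x) ≠ 0) :
    HasFDerivWithinAt (fun x ↦ (conj (u (-conj x)))⁻¹) (reflectedDifferential (u (-conj x)) T)
      t x := by
  have hσ : HasFDerivWithinAt (fun x : ℂ ↦ -conj x) (-(conjCLE : ℂ →L[ℝ] ℂ)) t x :=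
    conjCLE.hasFDerivWithinAt.neg
  have hconj : HasFDerivWithinAt (fun x ↦ conj (u (-conj x)))
      ((conjCLE : ℂ →L[ℝ] ℂ) ∘L T ∘L (-(conjCLE : ℂ →L[ℝ] ℂ))) t x :=
    conjCLE.hasFDerivAt.comp_hasFDerivWithinAt x (hu.comp x hσ hst)
  have hinv := (hasDerivAt_inv ((map_ne_zero conj).2 hx)).complexToReal_fderiv
  refine (hinv.comp_hasFDerivWithinAt x hconj).congr_fderiv (ContinuousLinearMap.ext fun v ↦ ?_)
  simp [reflectedDifferential_apply]

/- On the circle `1 / conj w = w`. Differentials agree as soon as they agree on `I`, where the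
tangential derivative of the circle is fixed by the reflection, and have the same Cauchy–Riemann
part. -/
lemma reflectedDifferential_eq_self {w : ℂ} {T : ℂ →L[ℝ] ℂ} (hw : ‖w‖ = 1)
    (htan : inner ℝ w (T I) = 0)
    (hrad : w ^ 2 * conj (cauchyRiemann T) = cauchyRiemann T) :
    reflectedDifferential w T = T := by
  have hcr : cauchyRiemann (reflectedDifferential w T) = cauchyRiemann T := by
    rw [cauchyRiemann_reflectedDifferential, inv_conj_eq_self hw, hrad]
  have hI : reflectedDifferential w T I = T I := by
    have hinner : w * conj (T I) + conj w * T I = 0 := by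
      have hadd := add_conj (T I * conj w)
      rw [map_mul, conj_conj, ← Complex.inner, htan] at hadd
      push_cast at hadd
      linear_combination hadd
    have hww : w * conj w = 1 := by
      rw [mul_conj, normSq_eq_norm_sq, hw, one_pow, Complex.ofReal_one]
    rw [reflectedDifferential_apply, ← inv_pow, inv_conj_eq_self hw, conj_I, map_neg, map_neg]
    linear_combination -w * hinner + T I * hww
  have h1 : reflectedDifferential w T 1 = T 1 := by
    rw [cauchyRiemann, cauchyRiemann, hI] at hcr
    exact add_right_cancel hcr
  ext c
  rw [apply_eq_smul_wirtingerDeriv_add, apply_eq_smul_wirtingerDeriv_add T, hcr, wirtingerDeriv,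
    wirtingerDeriv, h1, hI]

/-- `U` is a `C¹` map with differential `U'` from the closed right half-plane to the closed unit
disk, solves `∂_s U + i ∂_t U = G(t, U)`, and maps the imaginary axis to the unit circle. -/
structure IsHalfPlaneSolution (G : ℝ → ℂ → ℂ) (U : ℂ → ℂ) (U' : ℂ → ℂ →L[ℝ] ℂ) : Prop where
  hasFDerivWithinAt : ∀ x ∈ rightHalfPlane, HasFDerivWithinAt U (U' x) rightHalfPlane x
  continuousOn : ContinuousOn U' rightHalfPlane
  norm_le_one : ∀ x ∈ rightHalfPlane, ‖U x‖ ≤ 1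
  cauchyRiemann_eq : ∀ x ∈ rightHalfPlane, cauchyRiemann (U' x) = G x.im (U x)
  norm_eq_one : ∀ x, x.re = 0 → ‖U x‖ = 1

namespace IsHalfPlaneSolution

variable {K Λ : ℝ} {G : ℝ → ℂ → ℂ} {U : ℂ → ℂ} {U' : ℂ → ℂ →L[ℝ] ℂ}

lemma inner_apply_I_eq_zero (hU : IsHalfPlaneSolution G U U') {x : ℂ} (hx : x.re = 0) :
    inner ℝ (U x) (U' x I) = 0 := by
  have hline : HasDerivAt (fun y : ℝ ↦ x + y * I) I 0 := by
    simpa using ((hasDerivAt_id (0 : ℝ)).ofReal_comp.mul_const I).const_add x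
  have hre (y : ℝ) : (x + y * I).re = 0 := by simp [hx]
  have hcurve : HasDerivAt (fun y : ℝ ↦ U (x + y * I)) (U' x I) 0 :=
    (hU.hasFDerivWithinAt x hx.ge).comp_hasDerivAt_of_eq 0 hline (.of_forall fun y ↦ (hre y).ge)
      (by simp)
  have hconst : (fun y : ℝ ↦ ‖U (x + y * I)‖ ^ 2) = fun _ ↦ 1 := by
    ext y
    rw [hU.norm_eq_one _ (hre y), one_pow]
  have hderiv := hcurve.norm_sq.unique (hconst ▸ hasDerivAt_const _ _)
  simpa using hderiv

lemma reflectedDifferential_eq (hG : IsFloerField K Λ G) (hU : IsHalfPlaneSolution G U U') {x : ℂ}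
    (hx : x.re = 0) : reflectedDifferential (U (-conj x)) (U' (-conj x)) = U' x := by
  have hxR : x ∈ rightHalfPlane := hx.ge
  rw [neg_conj_eq_self hx]
  refine reflectedDifferential_eq_self (hU.norm_eq_one x hx) (hU.inner_apply_I_eq_zero hx) ?_
  rw [hU.cauchyRiemann_eq x hxR]
  exact hG.radial x.im _ (hU.norm_eq_one x hx)

/-- The extension of `U` to the left strip by reflection in the imaginary axis and the unit
circle. -/
noncomputable def extend (U : ℂ → ℂ) : ℂ → ℂ :=
  rightHalfPlane.piecewise U fun x ↦ (conj (U (-conj x)))⁻¹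

/-- The differential of `IsHalfPlaneSolution.extend U`. -/
noncomputable def extendFDeriv (U : ℂ → ℂ) (U' : ℂ → ℂ →L[ℝ] ℂ) : ℂ → ℂ →L[ℝ] ℂ :=
  rightHalfPlane.piecewise U' fun x ↦ reflectedDifferential (U (-conj x)) (U' (-conj x))

lemma extend_of_re_nonneg {x : ℂ} (hx : 0 ≤ x.re) : extend U x = U x :=
  piecewise_eq_of_mem _ _ _ hx

lemma extendFDeriv_of_re_nonneg {x : ℂ} (hx : 0 ≤ x.re) : extendFDeriv U U' x = U' x :=
  piecewise_eq_of_mem _ _ _ hx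

lemma extend_of_re_neg {x : ℂ} (hx : x.re < 0) : extend U x = (conj (U (-conj x)))⁻¹ :=
  piecewise_eq_of_notMem _ _ _ hx.not_ge

lemma extendFDeriv_of_re_neg {x : ℂ} (hx : x.re < 0) :
    extendFDeriv U U' x = reflectedDifferential (U (-conj x)) (U' (-conj x)) :=
  piecewise_eq_of_notMem _ _ _ hx.not_ge

lemma ne_zero_of_mem_leftStrip (hlow : ∀ x : ℂ, x.re ∈ Icc 0 1 → 1 / 2 ≤ ‖U x‖) {x : ℂ}
    (hx : x ∈ leftStrip) : U (-conj x) ≠ 0 := by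
  have hle := hlow (-conj x) (by simpa [leftStrip, and_comm, neg_le] using hx)
  exact norm_pos_iff.1 (by linarith)

lemma hasFDerivAt_extend (hG : IsFloerField K Λ G) (hU : IsHalfPlaneSolution G U U')
    (hlow : ∀ x : ℂ, x.re ∈ Icc 0 1 → 1 / 2 ≤ ‖U x‖) {x : ℂ} (hx : -1 < x.re) :
    HasFDerivAt (extend U) (extendFDeriv U U' x) x := by
  refine (hasFDerivWithinAt_piecewise_union isClosed_rightHalfPlane isClosed_leftStrip
    hU.hasFDerivWithinAt (fun y hy ↦ ?_) (fun y hy ↦ ?_) (fun y hy ↦ ?_) x).hasFDerivAt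
      (rightHalfPlane_union_leftStrip_mem_nhds hx)
  · exact hasFDerivWithinAt_inv_conj_comp (hU.hasFDerivWithinAt _ (mapsTo_neg_conj_leftStrip hy))
      mapsTo_neg_conj_leftStrip (ne_zero_of_mem_leftStrip hlow hy)
  · have hy0 := rightHalfPlane_inter_leftStrip_re hy
    rw [neg_conj_eq_self hy0, inv_conj_eq_self (hU.norm_eq_one y hy0)]
  · exact (hU.reflectedDifferential_eq hG (rightHalfPlane_inter_leftStrip_re hy)).symm

lemma continuousOn_extendFDeriv (hG : IsFloerField K Λ G) (hU : IsHalfPlaneSolution G U U')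
    (hlow : ∀ x : ℂ, x.re ∈ Icc 0 1 → 1 / 2 ≤ ‖U x‖) :
    ContinuousOn (extendFDeriv U U') {x | -1 < x.re} := by
  refine (continuousOn_piecewise_union isClosed_rightHalfPlane isClosed_leftStrip
    hU.continuousOn ?_ fun y hy ↦ ?_).mono fun x hx ↦
      mem_of_mem_nhds (rightHalfPlane_union_leftStrip_mem_nhds hx)
  · have hσ : ContinuousOn (fun x : ℂ ↦ -conj x) leftStrip := by fun_prop
    have hUσ : ContinuousOn (fun x ↦ U (-conj x)) leftStrip :=
      ContinuousOn.comp (fun x hx ↦ (hU.hasFDerivWithinAt x hx).continuousWithinAt) hσ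
        mapsTo_neg_conj_leftStrip
    have hinv : ContinuousOn (fun x ↦ (conj (U (-conj x)) ^ 2)⁻¹) leftStrip :=
      ((continuous_conj.comp_continuousOn hUσ).pow 2).inv₀ fun x hx ↦
        pow_ne_zero 2 ((map_ne_zero _).2 (ne_zero_of_mem_leftStrip hlow hx))
    exact hinv.smul (continuousOn_const.clm_comp
      ((hU.continuousOn.comp hσ mapsTo_neg_conj_leftStrip).clm_comp continuousOn_const))
  · exact (hU.reflectedDifferential_eq hG (rightHalfPlane_inter_leftStrip_re hy)).symm

lemma norm_extend_le (hU : IsHalfPlaneSolution G U U')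
    (hlow : ∀ x : ℂ, x.re ∈ Icc 0 1 → 1 / 2 ≤ ‖U x‖) {x : ℂ} (hx : -1 < x.re) :
    ‖extend U x‖ ≤ 2 := by
  rcases le_or_gt 0 x.re with hx0 | hx0
  · rw [extend_of_re_nonneg hx0]
    linarith [hU.norm_le_one x hx0]
  · rw [extend_of_re_neg hx0, norm_inv_conj]
    refine inv_le_of_inv_le₀ two_pos ?_
    simpa using hlow (-conj x) ⟨by simpa using hx0.le, by simpa using by linarith⟩

lemma cauchyRiemann_extendFDeriv (hG : IsFloerField K Λ G) (hU : IsHalfPlaneSolution G U U')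
    (hlow : ∀ x : ℂ, x.re ∈ Icc 0 1 → 1 / 2 ≤ ‖U x‖) {x : ℂ} (hx : -1 < x.re) :
    cauchyRiemann (extendFDeriv U U' x) = reflectedField G x.im (extend U x) := by
  rcases le_or_gt 0 x.re with hx0 | hx0
  · rw [extendFDeriv_of_re_nonneg hx0, extend_of_re_nonneg hx0, hU.cauchyRiemann_eq x hx0,
      IsFloerField.reflectedField_of_norm_le_one (hU.norm_le_one x hx0)]
  · have hσx : -conj x ∈ rightHalfPlane := by simpa [rightHalfPlane] using hx0.le
    have hσx0 := ne_zero_of_mem_leftStrip hlow ⟨hx.le, hx0.le⟩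
    have h1 : 1 ≤ ‖(conj (U (-conj x)))⁻¹‖ := by
      rw [norm_inv_conj]
      exact (one_le_inv₀ (norm_pos_iff.2 hσx0)).2 (hU.norm_le_one _ hσx)
    rw [extendFDeriv_of_re_neg hx0, extend_of_re_neg hx0, cauchyRiemann_reflectedDifferential,
      hU.cauchyRiemann_eq _ hσx, hG.reflectedField_of_one_le_norm h1, map_inv₀, conj_conj, inv_inv]
    simp

theorem isSemilinearCROn_extend (hG : IsFloerField K Λ G) (hU : IsHalfPlaneSolution G U U')
    (hlow : ∀ x : ℂ, x.re ∈ Icc 0 1 → 1 / 2 ≤ ‖U x‖) :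
    IsSemilinearCROn 2 (4 * K) (4 * K + 6 * Λ) (extend U) (extendFDeriv U U')
      {x | -1 < x.re} where
  hasFDerivAt _ hx := hU.hasFDerivAt_extend hG hlow hx
  continuousOn := hU.continuousOn_extendFDeriv hG hlow
  norm_le _ hx := hU.norm_extend_le hlow hx
  norm_cauchyRiemann_le x hx := by
    rw [hU.cauchyRiemann_extendFDeriv hG hlow hx]
    exact hG.norm_reflectedField_le (hU.norm_extend_le hlow hx)
  norm_cauchyRiemann_sub_le x hx y hy := by
    have hK := hG.bound_nonneg
    have hΛ := hG.lipschitz_nonneg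
    rw [hU.cauchyRiemann_extendFDeriv hG hlow hx, hU.cauchyRiemann_extendFDeriv hG hlow hy]
    refine (hG.norm_reflectedField_sub_le (hU.norm_extend_le hlow hx)
      (hU.norm_extend_le hlow hy)).trans ?_
    gcongr
    rw [← sub_im]
    exact abs_im_le_norm _

theorem norm_le_of_half_le_norm (hG : IsFloerField K Λ G) (hU : IsHalfPlaneSolution G U U')
    (hlow : ∀ x : ℂ, x.re ∈ Icc 0 1 → 1 / 2 ≤ ‖U x‖) {x : ℂ} (hx : x ∈ rightHalfPlane) :
    ‖U' x‖ ≤ 2 * gradientConst 2 (4 * K) (4 * K + 6 * Λ) := by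
  have hK := hG.bound_nonneg
  have hΛ := hG.lipschitz_nonneg
  rw [← extendFDeriv_of_re_nonneg (U := U) (U' := U') hx, mul_comm, ← div_inv_eq_mul, ← one_div]
  refine ((hU.isSemilinearCROn_extend hG hlow).mono fun y hy ↦ ?_).norm_le_gradientConst_div
    one_half_pos one_half_lt_one.le (by positivity)
  have hyx := (abs_re_le_norm (y - x)).trans (mem_closedBall_iff_norm.1 hy)
  rw [sub_re] at hyx
  have hx0 : 0 ≤ x.re := hx
  exact mem_ofPred_eq ▸ (by linarith [neg_abs_le (y.re - x.re)])

theorem isSemilinearCROn (hG : IsFloerField K Λ G) (hU : IsHalfPlaneSolution G U U') :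
    IsSemilinearCROn 1 K Λ U U' {x | 0 < x.re} where
  hasFDerivAt x hx := (hU.hasFDerivWithinAt x (mem_rightHalfPlane_of_re_pos hx)).hasFDerivAt
    (mem_of_superset ((isOpen_lt continuous_const continuous_re).mem_nhds hx)
      fun _ ↦ mem_rightHalfPlane_of_re_pos)
  continuousOn := hU.continuousOn.mono fun _ ↦ mem_rightHalfPlane_of_re_pos
  norm_le x hx := hU.norm_le_one x (mem_rightHalfPlane_of_re_pos hx)
  norm_cauchyRiemann_le x hx := by
    rw [hU.cauchyRiemann_eq x (mem_rightHalfPlane_of_re_pos hx)]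
    exact hG.norm_le _ _ (hU.norm_le_one x (mem_rightHalfPlane_of_re_pos hx))
  norm_cauchyRiemann_sub_le x hx y hy := by
    have hxR := mem_rightHalfPlane_of_re_pos hx
    have hyR := mem_rightHalfPlane_of_re_pos hy
    have hΛ := hG.lipschitz_nonneg
    rw [hU.cauchyRiemann_eq x hxR, hU.cauchyRiemann_eq y hyR]
    refine (hG.norm_sub_le _ _ _ _ (hU.norm_le_one x hxR) (hU.norm_le_one y hyR)).trans ?_
    gcongr
    rw [← sub_im]
    exact abs_im_le_norm _

theorem norm_le_of_lt_re (hG : IsFloerField K Λ G) (hU : IsHalfPlaneSolution G U U') {x : ℂ}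
    {R : ℝ} (hR : 0 < R) (hR1 : R ≤ 1) (hx : R < x.re) :
    ‖U' x‖ ≤ gradientConst 1 K Λ / R := by
  refine ((hU.isSemilinearCROn hG).mono fun y hy ↦ ?_).norm_le_gradientConst_div hR hR1
    hG.lipschitz_nonneg
  have hyx := (abs_re_le_norm (y - x)).trans (mem_closedBall_iff_norm.1 hy)
  rw [sub_re] at hyx
  exact mem_ofPred_eq ▸ (by linarith [neg_abs_le (y.re - x.re)])

lemma norm_sub_le_of_re_eq (hG : IsFloerField K Λ G) (hU : IsHalfPlaneSolution G U U') {x y : ℂ}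
    (hx : x.re ∈ Ioc 0 1) (hxy : x.re = y.re) :
    ‖U y - U x‖ ≤ gradientConst 1 K Λ / (x.re / 2) * ‖y - x‖ := by
  have hx0 := hx.1
  have hconv : Convex ℝ {w : ℂ | w.re = x.re} := convex_hyperplane reLm.isLinear _
  refine hconv.norm_image_sub_le_of_norm_hasFDerivWithin_le (f' := U') (fun w hw ↦ ?_)
    (fun w hw ↦ hU.norm_le_of_lt_re hG (by positivity) (by linarith [hx.2]) ?_) rfl hxy.symm
  · exact ((hU.isSemilinearCROn hG).hasFDerivAt w (hx0.trans_eq hw.symm)).hasFDerivWithinAt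
  · rw [mem_ofPred_eq.mp hw]
    exact half_lt_self hx0

lemma norm_le_three_div_four (hG : IsFloerField K Λ G) (hU : IsHalfPlaneSolution G U U') {x y : ℂ}
    (hx : x.re ∈ Ioc 0 1) (hxy : x.re = y.re) (hlow : ‖U x‖ < 1 / 2)
    (hdist : ‖y - x‖ ≤ x.re / (8 * gradientConst 1 K Λ)) : ‖U y‖ ≤ 3 / 4 := by
  have hx0 := hx.1
  have hC : 0 < gradientConst 1 K Λ := gradientConst_pos zero_le_one hG.bound_nonneg
    hG.lipschitz_nonneg
  have hsub : ‖U y - U x‖ ≤ 1 / 4 := calc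
    _ ≤ gradientConst 1 K Λ / (x.re / 2) * (x.re / (8 * gradientConst 1 K Λ)) :=
      (hU.norm_sub_le_of_re_eq hG hx hxy).trans (by gcongr)
    _ = 1 / 4 := by
      field_simp
      norm_num
  linarith [norm_sub_norm_le (U y) (U x)]

lemma fderiv_add_mul_I_eq (hU : IsHalfPlaneSolution G U U') {T : ℝ}
    (hper : ∀ x ∈ rightHalfPlane, U (x + T * I) = U x) {x : ℂ} (hx : x ∈ rightHalfPlane) :
    U' (x + T * I) = U' x := by
  have hadd : MapsTo (fun y ↦ y + T * I) rightHalfPlane rightHalfPlane := fun y hy ↦ by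
    simpa [rightHalfPlane] using hy
  have hshift : HasFDerivWithinAt (fun y ↦ U (y + T * I)) (U' (x + T * I)) rightHalfPlane x :=
    (hU.hasFDerivWithinAt _ (hadd hx)).comp x ((hasFDerivWithinAt_id x _).add_const _) hadd
  exact (uniqueDiffOn_rightHalfPlane x hx).eq
    (hshift.congr (fun y hy ↦ (hper y hy).symm) (hper x hx).symm) (hU.hasFDerivWithinAt x hx)

theorem exists_norm_le_of_periodic (hG : IsFloerField K Λ G) (hU : IsHalfPlaneSolution G U U')
    {T : ℝ} (hT : 0 < T) (hper : ∀ x ∈ rightHalfPlane, U (x + T * I) = U x) :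
    ∃ C, ∀ x ∈ rightHalfPlane, ‖U' x‖ ≤ C := by
  obtain ⟨C, hC⟩ := exists_bound_of_periodic_of_isCompact (X := ℝ) (s := Icc 0 1)
    (F := fun p ↦ U' (p.2 + p.1 * I)) hT isCompact_Icc
    (hU.continuousOn.comp (by fun_prop) fun p hp ↦ by simpa [rightHalfPlane] using hp.2.1)
    fun s hs t ↦ by
      have hshift := hU.fderiv_add_mul_I_eq hper (x := s + t * I)
        (by simpa [rightHalfPlane] using hs.1)
      simpa [add_mul, add_assoc] using hshift
  refine ⟨max C (gradientConst 1 K Λ / 1), fun x hx ↦ ?_⟩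
  rcases lt_or_ge 1 x.re with h1 | h1
  · exact (hU.norm_le_of_lt_re hG one_pos le_rfl h1).trans (le_max_right _ _)
  · have hx1 := hC x.im x.re ⟨hx, h1⟩
    rw [re_add_im] at hx1
    exact hx1.trans (le_max_left _ _)

end IsHalfPlaneSolution

end HalfPlane

section Hamiltonian

lemma fderiv_mul_I_eq_zero {f : ℂ → ℝ} {w : ℂ} (hf : DifferentiableAt ℝ f w) (hw : ‖w‖ = 1)
    (hconst : ∀ v, ‖v‖ = 1 → f v = f w) : fderiv ℝ f w (w * I) = 0 := by
  have hcurve : HasDerivAt (fun s : ℝ ↦ w * exp (s * I)) (w * I) 0 := by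
    simpa using ((hasDerivAt_id (0 : ℝ)).ofReal_comp.mul_const I).cexp.const_mul w
  have hcomp := hf.hasFDerivAt.comp_hasDerivAt_of_eq 0 hcurve (by simp)
  have hfun : (f ∘ fun s : ℝ ↦ w * exp (s * I)) = fun _ ↦ f w := by
    ext s
    exact hconst _ (by rw [norm_mul, hw, norm_exp_ofReal_mul_I, mul_one])
  exact (hfun ▸ hcomp).unique (hasDerivAt_const _ _)

variable {H : ℝ → ℂ → ℝ}

lemma contDiff_XH {m n : WithTop ℕ∞} (hH : ContDiff ℝ n fun p : ℝ × ℂ ↦ H p.1 p.2)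
    (hmn : m + 1 ≤ n) : ContDiff ℝ m fun p : ℝ × ℂ ↦ XH H p.1 p.2 := by
  have hfderiv : ContDiff ℝ m fun p : ℝ × ℂ ↦ fderiv ℝ (H p.1) p.2 :=
    ContDiff.fderiv (f := fun p : ℝ × ℂ ↦ H p.1)
      (hH.comp (contDiff_fst.fst.prodMk contDiff_snd)) contDiff_snd hmn
  have happly (v : ℂ) : ContDiff ℝ m fun p : ℝ × ℂ ↦ ((fderiv ℝ (H p.1) p.2 v : ℝ) : ℂ) :=
    ofRealCLM.contDiff.comp (hfderiv.clm_apply contDiff_const)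
  exact contDiff_const.mul ((happly 1).add ((happly I).mul contDiff_const))

lemma I_mul_XH (H : ℝ → ℂ → ℝ) (t : ℝ) (w : ℂ) :
    I * XH H t w = -(fderiv ℝ (H t) w 1 + fderiv ℝ (H t) w I * I) := by
  rw [XH]
  linear_combination (fderiv ℝ (H t) w 1 + fderiv ℝ (H t) w I * I : ℂ) * I_sq

/- The derivative of `H t` along the circle vanishes, so its gradient is a real multiple of `w`. -/
lemma sq_mul_conj_I_mul_XH {t : ℝ} {w : ℂ} (hH : DifferentiableAt ℝ (H t) w) (hw : ‖w‖ = 1)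
    (hconst : ∀ v, ‖v‖ = 1 → H t v = H t w) :
    w ^ 2 * conj (I * XH H t w) = I * XH H t w := by
  have htan : -w.im * fderiv ℝ (H t) w 1 + w.re * fderiv ℝ (H t) w I = 0 := by
    have hwI : w * I = (-w.im) • (1 : ℂ) + w.re • I := by
      apply Complex.ext <;> simp
    rw [← fderiv_mul_I_eq_zero hH hw hconst, hwI, map_add, map_smul, map_smul, smul_eq_mul,
      smul_eq_mul]
  have hww : w * conj w = 1 := by
    rw [mul_conj, normSq_eq_norm_sq, hw, one_pow, Complex.ofReal_one]
  have hreal : conj (I * XH H t w) * w = I * XH H t w * conj w := by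
    rw [I_mul_XH]
    apply Complex.ext
    · simp
    · simp
      linarith
  linear_combination w * hreal + I * XH H t w * hww

lemma periodic_XH (hper : ∀ t w, H (t + 1) w = H t w) (w : ℂ) :
    Function.Periodic (fun t ↦ XH H t w) 1 := fun t ↦ by
  have hH : H (t + 1) = H t := funext (hper t)
  simp only [XH, hH]

lemma exists_norm_XH_le (hH : ContDiff ℝ 1 fun p : ℝ × ℂ ↦ H p.1 p.2)
    (hper : ∀ t w, H (t + 1) w = H t w) : ∃ K, ∀ t w, ‖w‖ ≤ 1 → ‖XH H t w‖ ≤ K := by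
  obtain ⟨K, hK⟩ := exists_bound_of_periodic_of_isCompact one_pos (isCompact_closedBall (0 : ℂ) 1)
    (contDiff_XH (m := 0) hH (by simp)).continuous.continuousOn fun w _ ↦ periodic_XH hper w
  exact ⟨K, fun t w hw ↦ hK t w (by simpa using hw)⟩

lemma exists_norm_XH_sub_le (hH : ContDiff ℝ 2 fun p : ℝ × ℂ ↦ H p.1 p.2)
    (hper : ∀ t w, H (t + 1) w = H t w) :
    ∃ Λ, ∀ t t' w w', ‖w‖ ≤ 1 → ‖w'‖ ≤ 1 →
      ‖XH H t w - XH H t' w'‖ ≤ Λ * (|t - t'| + ‖w - w'‖) := by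
  set F : ℝ × ℂ → ℂ := fun p ↦ XH H p.1 p.2
  have hF : ContDiff ℝ 1 F := contDiff_XH hH one_add_one_eq_two.le
  have hperiodic (w : ℂ) : Function.Periodic (fun t ↦ fderiv ℝ F (t, w)) 1 := fun t ↦ by
    have hshift : (fun p ↦ F (p + (1, 0))) = F := by
      ext p
      simpa [F] using periodic_XH hper p.2 p.1
    have hcomp := fderiv_comp_add_right (𝕜 := ℝ) (f := F) (x := (t, w)) (1, 0)
    rw [hshift] at hcomp
    simpa using hcomp.symm
  obtain ⟨Λ, hΛ⟩ := exists_bound_of_periodic_of_isCompact one_pos (isCompact_closedBall (0 : ℂ) 1)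
    (hF.continuous_fderiv one_ne_zero).continuousOn fun w _ ↦ hperiodic w
  refine ⟨Λ, fun t t' w w' hw hw' ↦ ?_⟩
  have hΛ0 : 0 ≤ Λ := (norm_nonneg _).trans (hΛ 0 0 (by simp))
  have hlip : ‖F (t, w) - F (t', w')‖ ≤ Λ * ‖(t, w) - (t', w')‖ :=
    (convex_univ.prod (convex_closedBall (0 : ℂ) 1)).norm_image_sub_le_of_norm_hasFDerivWithin_le
      (fun p _ ↦ (hF.differentiable one_ne_zero p).hasFDerivAt.hasFDerivWithinAt)
      (fun p hp ↦ hΛ p.1 p.2 hp.2) ⟨mem_univ _, by simpa using hw'⟩ ⟨mem_univ _, by simpa using hw⟩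
  refine hlip.trans ?_
  gcongr
  exact max_le_add_of_nonneg (norm_nonneg _) (norm_nonneg _)

theorem exists_isFloerField_XH (hH : ContDiff ℝ 2 fun p : ℝ × ℂ ↦ H p.1 p.2)
    (hper : ∀ t w, H (t + 1) w = H t w)
    (hconst : ∀ t v w, ‖v‖ = 1 → ‖w‖ = 1 → H t v = H t w) :
    ∃ K Λ, ∀ τ, IsFloerField K Λ fun t w ↦ I * XH H (t + τ) w := by
  obtain ⟨K, hK⟩ := exists_norm_XH_le (hH.of_le one_le_two) hper
  obtain ⟨Λ, hΛ⟩ := exists_norm_XH_sub_le hH hper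
  refine ⟨K, Λ, fun τ ↦ ⟨fun t w hw ↦ ?_, fun t t' w w' hw hw' ↦ ?_, fun t w hw ↦ ?_⟩⟩
  · rw [norm_mul, norm_I, one_mul]
    exact hK _ w hw
  · rw [← mul_sub, norm_mul, norm_I, one_mul]
    simpa using hΛ (t + τ) (t' + τ) w w' hw hw'
  · have hHt : ContDiff ℝ 2 (H (t + τ)) := hH.comp (contDiff_const.prodMk contDiff_id)
    exact sq_mul_conj_I_mul_XH (hHt.differentiable two_ne_zero w) hw
      fun v hv ↦ hconst _ v w hv hw

end Hamiltonian

section Energy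

lemma sq_lintegral_le {α : Type*} [MeasurableSpace α] (μ : Measure α) {f : α → ℝ≥0∞}
    (hf : AEMeasurable f μ) : (∫⁻ x, f x ∂μ) ^ 2 ≤ μ univ * ∫⁻ x, f x ^ 2 ∂μ := by
  have hCS := lintegral_mul_le_Lp_mul_Lq μ Real.HolderConjugate.two_two
    (aemeasurable_const (b := (1 : ℝ≥0∞))) hf
  simp only [Pi.mul_apply, one_mul, rpow_two, one_pow, lintegral_one] at hCS
  calc _ ≤ (μ univ ^ (1 / 2 : ℝ) * (∫⁻ x, f x ^ 2 ∂μ) ^ (1 / 2 : ℝ)) ^ 2 := by gcongr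
    _ = μ univ * ∫⁻ x, f x ^ 2 ∂μ := by
      rw [← mul_rpow_of_nonneg _ _ (by positivity), ← rpow_two, ← rpow_mul]
      norm_num

variable {E : Type*} [NormedAddCommGroup E] [NormedSpace ℝ E]

lemma enorm_sub_sq_div_le_lintegral {f : ℝ → E} {a b : ℝ} (hab : a < b)
    (hf : ContDiffOn ℝ 1 f (Icc a b)) :
    ‖f b - f a‖ₑ ^ 2 / ENNReal.ofReal (b - a) ≤
      ∫⁻ s in Icc a b, ‖derivWithin f (Icc a b) s‖ₑ ^ 2 := by
  have hcont := hf.continuousOn_derivWithin (uniqueDiffOn_Icc hab) le_rfl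
  refine ENNReal.div_le_of_le_mul' ?_
  calc _ ≤ (∫⁻ s in Icc a b, ‖derivWithin f (Icc a b) s‖ₑ) ^ 2 := by
        gcongr
        exact enorm_sub_le_lintegral_derivWithin_Icc_of_contDiffOn_Icc hf hab.le
    _ ≤ _ := by
        refine (sq_lintegral_le _ ?_).trans_eq ?_
        · exact (continuous_enorm.comp_continuousOn hcont).aemeasurable measurableSet_Icc
        · rw [Measure.restrict_apply_univ, Real.volume_Icc]

lemma uniqueDiffOn_halfPlaneFrom (S : ℝ) : UniqueDiffOn ℝ (HalfPlaneFrom S) :=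
  (uniqueDiffOn_Ici S).prod uniqueDiffOn_univ

lemma derivWithin_eq_pds {f : ℝ × ℝ → E} {S b s t : ℝ} (hs : s ∈ Icc S b) (hSb : S < b)
    (hf : DifferentiableOn ℝ f (HalfPlaneFrom S)) :
    derivWithin (fun s ↦ f (s, t)) (Icc S b) s = pds (HalfPlaneFrom S) f (s, t) := by
  have hline : HasDerivWithinAt (fun s : ℝ ↦ (s, t)) (1, 0) (Icc S b) s :=
    ((hasDerivAt_id s).prodMk (hasDerivAt_const s t)).hasDerivWithinAt
  have hmaps : MapsTo (fun s ↦ (s, t)) (Icc S b) (HalfPlaneFrom S) := fun r hr ↦ ⟨hr.1, mem_univ t⟩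
  exact ((hf (s, t) (hmaps hs)).hasFDerivWithinAt.comp_hasDerivWithinAt s hline
    hmaps).derivWithin (uniqueDiffOn_Icc hSb s hs)

lemma continuousOn_pds {f : ℝ × ℝ → E} {S : ℝ} (hf : ContDiffOn ℝ 1 f (HalfPlaneFrom S)) :
    ContinuousOn (pds (HalfPlaneFrom S) f) (HalfPlaneFrom S) :=
  (hf.continuousOn_fderivWithin (uniqueDiffOn_halfPlaneFrom S) le_rfl).clm_apply continuousOn_const

lemma sq_mul_div_le_lintegral_pds {f : ℝ × ℝ → E} {S b c d δ : ℝ} (hSb : S < b) (hδ : 0 ≤ δ)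
    (hf : ContDiffOn ℝ 1 f (HalfPlaneFrom S))
    (hjump : ∀ t ∈ Icc c d, δ ≤ ‖f (b, t) - f (S, t)‖) :
    ENNReal.ofReal (δ ^ 2 / (b - S) * (d - c)) ≤
      ∫⁻ p in Icc S b ×ˢ Icc c d, ‖pds (HalfPlaneFrom S) f p‖ₑ ^ 2 := by
  have hbS : 0 < b - S := sub_pos.2 hSb
  have hsub : Icc S b ×ˢ Icc c d ⊆ HalfPlaneFrom S := prod_mono Icc_subset_Ici_self (subset_univ _)
  have hmeas : AEMeasurable (fun p ↦ ‖pds (HalfPlaneFrom S) f p‖ₑ ^ 2)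
      ((volume.restrict (Icc S b)).prod (volume.restrict (Icc c d))) := by
    rw [Measure.prod_restrict]
    exact ((continuous_enorm.comp_continuousOn ((continuousOn_pds hf).mono hsub)).aemeasurable
      (measurableSet_Icc.prod measurableSet_Icc)).pow_const 2
  rw [Measure.volume_eq_prod, ← Measure.prod_restrict, lintegral_prod_symm _ hmeas]
  calc _ = ∫⁻ _ in Icc c d, ENNReal.ofReal (δ ^ 2 / (b - S)) := by
        rw [setLIntegral_const, Real.volume_Icc, ← ENNReal.ofReal_mul (by positivity)]
    _ ≤ _ := setLIntegral_mono' measurableSet_Icc fun t ht ↦ ?_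
  have hline : ContDiffOn ℝ 1 (fun s ↦ f (s, t)) (Icc S b) :=
    hf.comp (contDiff_id.prodMk contDiff_const).contDiffOn fun s hs ↦ ⟨hs.1, mem_univ t⟩
  calc _ ≤ ‖f (b, t) - f (S, t)‖ₑ ^ 2 / ENNReal.ofReal (b - S) := by
        rw [ofReal_div_of_pos hbS, ofReal_pow hδ, ← ofReal_norm]
        gcongr
        exact hjump t ht
    _ ≤ ∫⁻ s in Icc S b, ‖derivWithin (fun s ↦ f (s, t)) (Icc S b) s‖ₑ ^ 2 :=
        enorm_sub_sq_div_le_lintegral hSb hline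
    _ = _ := setLIntegral_congr_fun measurableSet_Icc fun s hs ↦ by
        simp only [derivWithin_eq_pds hs hSb (hf.differentiableOn one_ne_zero)]

end Energy

section FloerHalfCylinder

variable {H : ℝ → ℂ → ℝ} {S τ : ℝ} {n : ℕ} {z : ℝ × ℝ → ℂ}

/-- `z` is a Floer half-cylinder: an `n`-periodic solution `[S, ∞) × ℝ → D` of the Floer equation
of the time-shifted Hamiltonian `H(· + τ, ·)`, with boundary values on the unit circle,
of class `C¹` up to the boundary. -/
structure IsFloerHalfCylinder (H : ℝ → ℂ → ℝ) (S τ : ℝ) (n : ℕ) (z : ℝ × ℝ → ℂ) : Prop where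
  contDiffOn : ContDiffOn ℝ 1 z (HalfPlaneFrom S)
  mem_disk : ∀ p ∈ HalfPlaneFrom S, z p ∈ Disk
  periodic : ∀ s t, S ≤ s → z (s, t + n) = z (s, t)
  floer_eq : ∀ p ∈ HalfPlaneFrom S, pds (HalfPlaneFrom S) z p +
    I * (pdt (HalfPlaneFrom S) z p - XH H (p.2 + τ) (z p)) = 0
  norm_eq_one : ∀ t, ‖z (S, t)‖ = 1

/-- The map `z` on `[S, ∞) × ℝ` in the complex coordinate `(s - S) + i t` of the right half
plane. -/
def inComplexCoord (S : ℝ) (z : ℝ × ℝ → ℂ) (x : ℂ) : ℂ := z (S + x.re, x.im)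

/-- The differential of `inComplexCoord S z`. -/
noncomputable def inComplexCoordFDeriv (S : ℝ) (z : ℝ × ℝ → ℂ) (x : ℂ) : ℂ →L[ℝ] ℂ :=
  (fderivWithin ℝ z (HalfPlaneFrom S) (S + x.re, x.im)).comp (equivRealProdCLM : ℂ →L[ℝ] ℝ × ℝ)

lemma inComplexCoordFDeriv_one (x : ℂ) :
    inComplexCoordFDeriv S z x 1 = pds (HalfPlaneFrom S) z (S + x.re, x.im) := by
  simp [inComplexCoordFDeriv, pds]

lemma inComplexCoordFDeriv_I (x : ℂ) :
    inComplexCoordFDeriv S z x I = pdt (HalfPlaneFrom S) z (S + x.re, x.im) := by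
  simp [inComplexCoordFDeriv, pdt]

lemma mk_mem_halfPlaneFrom {x : ℂ} (hx : x ∈ rightHalfPlane) :
    (S + x.re, x.im) ∈ HalfPlaneFrom S :=
  mk_mem_prod (mem_Ici.2 (le_add_of_nonneg_right hx)) (mem_univ _)

lemma hasFDerivWithinAt_inComplexCoord (hz : DifferentiableOn ℝ z (HalfPlaneFrom S)) {x : ℂ}
    (hx : x ∈ rightHalfPlane) :
    HasFDerivWithinAt (inComplexCoord S z) (inComplexCoordFDeriv S z x) rightHalfPlane x := by
  have hcoord : HasFDerivAt (fun x : ℂ ↦ (S + x.re, x.im))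
      (equivRealProdCLM : ℂ →L[ℝ] ℝ × ℝ) x := by
    have hshift : (fun x : ℂ ↦ (S + x.re, x.im)) = fun x ↦ (S, 0) + equivRealProdCLM x := by
      ext x <;> simp
    rw [hshift]
    exact equivRealProdCLM.hasFDerivAt.const_add (S, 0)
  exact (hz _ (mk_mem_halfPlaneFrom hx)).hasFDerivWithinAt.comp x hcoord.hasFDerivWithinAt
    fun y hy ↦ mk_mem_halfPlaneFrom hy

lemma continuousOn_inComplexCoordFDeriv (hz : ContDiffOn ℝ 1 z (HalfPlaneFrom S)) :
    ContinuousOn (inComplexCoordFDeriv S z) rightHalfPlane := by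
  have hfderiv := hz.continuousOn_fderivWithin (uniqueDiffOn_halfPlaneFrom S) le_rfl
  exact (hfderiv.comp (f := fun x : ℂ ↦ (S + x.re, x.im)) (by fun_prop)
    fun x hx ↦ mk_mem_halfPlaneFrom hx).clm_comp continuousOn_const

lemma norm_pds_le_and_norm_pdt_le {C : ℝ}
    (hC : ∀ x ∈ rightHalfPlane, ‖inComplexCoordFDeriv S z x‖ ≤ C) {p : ℝ × ℝ}
    (hp : p ∈ HalfPlaneFrom S) :
    ‖pds (HalfPlaneFrom S) z p‖ ≤ C ∧ ‖pdt (HalfPlaneFrom S) z p‖ ≤ C := by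
  set x : ℂ := ⟨p.1 - S, p.2⟩
  have hx : 0 ≤ x.re := sub_nonneg.2 hp.1
  have hxp : (S + x.re, x.im) = p := by simp [x]
  rw [← hxp, ← inComplexCoordFDeriv_one, ← inComplexCoordFDeriv_I]
  exact ⟨ContinuousLinearMap.le_of_opNorm_le_of_le _ (hC x hx) norm_one.le |>.trans_eq (mul_one C),
    ContinuousLinearMap.le_of_opNorm_le_of_le _ (hC x hx) norm_I.le |>.trans_eq (mul_one C)⟩

lemma lintegral_pds_le_two_mul_floerEnergyFrom {b c d : ℝ} (hc : 0 < c) (hd : d ≤ n) :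
    ∫⁻ p in Icc S b ×ˢ Icc c d, ‖pds (HalfPlaneFrom S) z p‖ₑ ^ 2 ≤
      2 * floerEnergyFrom H S n τ z := by
  have hsub : Icc S b ×ˢ Icc c d ⊆ Ici S ×ˢ Ioc (0 : ℝ) n :=
    prod_mono Icc_subset_Ici_self fun t ht ↦ ⟨hc.trans_le ht.1, ht.2.trans hd⟩
  rw [floerEnergyFrom, ← mul_assoc, one_div, ENNReal.mul_inv_cancel two_ne_zero ofNat_ne_top,
    one_mul]
  refine (lintegral_mono_set hsub).trans (lintegral_mono fun p ↦ ?_)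
  rw [← ofReal_norm, ← ofReal_pow (norm_nonneg _)]
  gcongr
  exact le_add_of_nonneg_right (sq_nonneg _)

lemma exists_Icc_subset_Ioc_of_mem {T ℓ t : ℝ} (hℓ : 0 ≤ ℓ) (hT : 2 * ℓ ≤ T) (ht : t ∈ Ioc 0 T) :
    ∃ c, 0 < c ∧ c + ℓ ≤ T ∧ ∀ y ∈ Icc c (c + ℓ), |y - t| ≤ ℓ := by
  rcases le_or_gt (t + ℓ) T with h | h
  · exact ⟨t, ht.1, h, fun y hy ↦ abs_le.2 ⟨by linarith [hy.1], by linarith [hy.2]⟩⟩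
  · exact ⟨t - ℓ, by linarith, by linarith [ht.2],
      fun y hy ↦ abs_le.2 ⟨by linarith [hy.1], by linarith [hy.2]⟩⟩

namespace IsFloerHalfCylinder

lemma isHalfPlaneSolution (hz : IsFloerHalfCylinder H S τ n z) :
    IsHalfPlaneSolution (fun t w ↦ I * XH H (t + τ) w) (inComplexCoord S z)
      (inComplexCoordFDeriv S z) where
  hasFDerivWithinAt _ hx :=
    hasFDerivWithinAt_inComplexCoord (hz.contDiffOn.differentiableOn one_ne_zero) hx
  continuousOn := continuousOn_inComplexCoordFDeriv hz.contDiffOn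
  norm_le_one _ hx := mem_closedBall_zero_iff.1 (hz.mem_disk _ (mk_mem_halfPlaneFrom hx))
  cauchyRiemann_eq x hx := by
    rw [cauchyRiemann, inComplexCoordFDeriv_one, inComplexCoordFDeriv_I, smul_eq_mul,
      inComplexCoord]
    linear_combination hz.floer_eq _ (mk_mem_halfPlaneFrom hx)
  norm_eq_one x hx := by
    rw [inComplexCoord, hx, add_zero, hz.norm_eq_one]

lemma exists_norm_le {K Λ : ℝ} (hG : IsFloerField K Λ fun t w ↦ I * XH H (t + τ) w)
    (hz : IsFloerHalfCylinder H S τ n z) (hn : 1 ≤ n) :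
    ∃ C, ∀ x ∈ rightHalfPlane, ‖inComplexCoordFDeriv S z x‖ ≤ C := by
  refine hz.isHalfPlaneSolution.exists_norm_le_of_periodic hG
    (Nat.cast_pos.2 (Nat.one_le_iff_ne_zero.1 hn).bot_lt) fun x hx ↦ ?_
  simpa [inComplexCoord] using hz.periodic (S + x.re) x.im (le_add_of_nonneg_right hx)

lemma exists_mem_Ioc_inComplexCoord_eq (hz : IsFloerHalfCylinder H S τ n z) (hn : 1 ≤ n) {x : ℂ}
    (hx : x ∈ rightHalfPlane) :
    ∃ y : ℂ, y.re = x.re ∧ y.im ∈ Ioc (0 : ℝ) n ∧ inComplexCoord S z y = inComplexCoord S z x := by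
  have hperiodic : Function.Periodic (fun t ↦ z (S + x.re, t)) n :=
    fun t ↦ hz.periodic _ t (le_add_of_nonneg_right hx)
  obtain ⟨t, ht, heq⟩ := hperiodic.exists_mem_Ioc (Nat.cast_pos.2 hn) x.im 0
  exact ⟨⟨x.re, t⟩, rfl, by rwa [zero_add] at ht, heq.symm⟩

/- Near `x` the map stays in `‖z‖ ≤ 3 / 4` on a vertical segment of length comparable to `x.re`, and
the horizontal segments from there to the boundary make a jump of `1 / 4` over the length `x.re`:
the two lengths cancel in the energy. -/
lemma le_floerEnergyFrom_of_norm_lt_half {K Λ : ℝ}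
    (hG : IsFloerField K Λ fun t w ↦ I * XH H (t + τ) w)
    (hz : IsFloerHalfCylinder H S τ n z) (hn : 1 ≤ n) {x : ℂ} (hx : x.re ∈ Ioc 0 1)
    (hxn : x.im ∈ Ioc (0 : ℝ) n) (hlow : ‖inComplexCoord S z x‖ < 1 / 2) :
    ENNReal.ofReal (1 / (128 * gradientConst 1 K Λ)) ≤ 2 * floerEnergyFrom H S n τ z := by
  have hg : 1 ≤ gradientConst 1 K Λ :=
    one_le_gradientConst zero_le_one hG.bound_nonneg hG.lipschitz_nonneg
  have hre : 0 < x.re := hx.1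
  set ℓ : ℝ := x.re / (8 * gradientConst 1 K Λ)
  have hℓ : 2 * ℓ ≤ n := calc
    2 * ℓ ≤ 1 := by
      rw [← mul_div_assoc, div_le_one (by positivity)]
      linarith [hx.2]
    _ ≤ n := Nat.one_le_cast.2 hn
  obtain ⟨c, hc, hcn, hclose⟩ := exists_Icc_subset_Ioc_of_mem (by positivity) hℓ hxn
  calc ENNReal.ofReal (1 / (128 * gradientConst 1 K Λ))
      = ENNReal.ofReal ((1 / 4) ^ 2 / (S + x.re - S) * (c + ℓ - c)) := by
        congr 1
        rw [add_sub_cancel_left, add_sub_cancel_left]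
        simp only [ℓ]
        field_simp
        norm_num
    _ ≤ ∫⁻ p in Icc S (S + x.re) ×ˢ Icc c (c + ℓ), ‖pds (HalfPlaneFrom S) z p‖ₑ ^ 2 :=
        sq_mul_div_le_lintegral_pds (by linarith) (by norm_num) hz.contDiffOn fun t ht ↦ ?_
    _ ≤ _ := lintegral_pds_le_two_mul_floerEnergyFrom hc hcn
  have hdist : ‖(⟨x.re, t⟩ : ℂ) - x‖ ≤ ℓ := by
    have hdiff : (⟨x.re, t⟩ : ℂ) - x = ((t - x.im : ℝ) : ℂ) * I := by
      apply Complex.ext <;> simp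
    rw [hdiff, norm_mul, norm_I, mul_one, norm_real]
    exact hclose t ht
  have hup : ‖z (S + x.re, t)‖ ≤ 3 / 4 :=
    hz.isHalfPlaneSolution.norm_le_three_div_four hG (y := ⟨x.re, t⟩) hx rfl hlow hdist
  rw [norm_sub_rev]
  linarith [norm_sub_norm_le (z (S, t)) (z (S + x.re, t)), hz.norm_eq_one t]

lemma half_le_norm_of_floerEnergyFrom_lt {K Λ : ℝ}
    (hG : IsFloerField K Λ fun t w ↦ I * XH H (t + τ) w)
    (hz : IsFloerHalfCylinder H S τ n z) (hn : 1 ≤ n)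
    (hE : 2 * floerEnergyFrom H S n τ z < ENNReal.ofReal (1 / (128 * gradientConst 1 K Λ)))
    {x : ℂ} (hx : x.re ∈ Icc 0 1) : 1 / 2 ≤ ‖inComplexCoord S z x‖ := by
  by_contra! hlow
  have hre : 0 < x.re := hx.1.lt_of_ne fun h ↦ by
    linarith [hz.isHalfPlaneSolution.norm_eq_one x h.symm]
  obtain ⟨y, hyx, hyn, heq⟩ := hz.exists_mem_Ioc_inComplexCoord_eq hn hx.1
  rw [← heq] at hlow
  exact hE.not_ge (hz.le_floerEnergyFrom_of_norm_lt_half hG hn (hyx ▸ ⟨hre, hx.2⟩) hyn hlow)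

lemma norm_le_of_floerEnergyFrom_lt {K Λ : ℝ}
    (hG : IsFloerField K Λ fun t w ↦ I * XH H (t + τ) w)
    (hz : IsFloerHalfCylinder H S τ n z) (hn : 1 ≤ n)
    (hE : 2 * floerEnergyFrom H S n τ z < ENNReal.ofReal (1 / (128 * gradientConst 1 K Λ)))
    {x : ℂ} (hx : x ∈ rightHalfPlane) :
    ‖inComplexCoordFDeriv S z x‖ ≤ 2 * gradientConst 2 (4 * K) (4 * K + 6 * Λ) :=
  hz.isHalfPlaneSolution.norm_le_of_half_le_norm hG
    (fun _ hx ↦ hz.half_le_norm_of_floerEnergyFrom_lt hG hn hE hx) hx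

end IsFloerHalfCylinder

theorem uniform_gradient_bounds_general
    (hH : ContDiff ℝ 2 fun p : ℝ × ℂ ↦ H p.1 p.2) (hper : ∀ t w, H (t + 1) w = H t w)
    (hconst : ∀ t v w, ‖v‖ = 1 → ‖w‖ = 1 → H t v = H t w)
    {S τ : ℕ → ℝ} {z : ℕ → ℝ × ℝ → ℂ}
    (hz : ∀ n, 1 ≤ n → IsFloerHalfCylinder H (S n) (τ n) n (z n))
    (hE : Tendsto (fun n ↦ floerEnergyFrom H (S n) n (τ n) (z n)) atTop (𝓝 0)) :
    ∃ C : ℝ, 0 < C ∧ ∀ n, 1 ≤ n → ∀ p ∈ HalfPlaneFrom (S n),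
      ‖pds (HalfPlaneFrom (S n)) (z n) p‖ ≤ C ∧ ‖pdt (HalfPlaneFrom (S n)) (z n) p‖ ≤ C := by
  obtain ⟨K, Λ, hG⟩ := exists_isFloerField_XH hH hper hconst
  have hthreshold : 0 < ENNReal.ofReal (1 / (128 * gradientConst 1 K Λ)) := by
    have := gradientConst_pos zero_le_one (hG 0).bound_nonneg (hG 0).lipschitz_nonneg
    exact ofReal_pos.2 (by positivity)
  have hE2 : Tendsto (fun n ↦ 2 * floerEnergyFrom H (S n) n (τ n) (z n)) atTop (𝓝 0) := by
    simpa using ENNReal.Tendsto.const_mul hE (.inr ofNat_ne_top)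
  obtain ⟨N, hN⟩ := eventually_atTop.1 (hE2.eventually_lt_const hthreshold)
  choose! M hM using fun n hn ↦ (hz n hn).exists_norm_le (hG (τ n)) hn
  obtain ⟨B, hB⟩ := ((finite_Iio N).image M).bddAbove
  set B' := 2 * gradientConst 2 (4 * K) (4 * K + 6 * Λ)
  refine ⟨max 1 (max B B'), by positivity, fun n hn p ↦ norm_pds_le_and_norm_pdt_le fun x hx ↦ ?_⟩
  refine le_max_of_le_right ?_
  rcases lt_or_ge n N with hnN | hNn
  · exact le_max_of_le_left ((hM n hn x hx).trans (hB (mem_image_of_mem M hnN)))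
  · exact le_max_of_le_right ((hz n hn).norm_le_of_floerEnergyFrom_lt (hG (τ n)) hn (hN n hNn) hx)

end FloerHalfCylinder

/-- **Uniform gradient bounds.**  If `z_n : [S_n,∞) × ℝ → D` are `n`-periodic solutions
of the Floer equation with unit-circle boundary values, and the Floer energies tend to
zero, then the gradients `∇z_n` are bounded uniformly in `n`. -/
theorem uniform_gradient_bounds
    (H : ℝ → ℂ → ℝ) (hH : IsAdmissible H)
    (S : ℕ → ℝ) (τ : ℕ → ℝ) (z : ℕ → ℝ × ℝ → ℂ)
    (hS : ∀ n, 1 ≤ n → S n ≤ 0)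
    (hz_smooth : ∀ n, 1 ≤ n → ContDiffOn ℝ (⊤ : ℕ∞) (z n) (HalfPlaneFrom (S n)))
    (hz_disk : ∀ n, 1 ≤ n → ∀ p ∈ HalfPlaneFrom (S n), z n p ∈ Disk)
    (hz_per : ∀ n, 1 ≤ n → ∀ s t : ℝ, S n ≤ s → z n (s, t + n) = z n (s, t))
    (hfloer : ∀ n, 1 ≤ n → ∀ p ∈ HalfPlaneFrom (S n),
      pds (HalfPlaneFrom (S n)) (z n) p +
        Complex.I * (pdt (HalfPlaneFrom (S n)) (z n) p - XH H (p.2 + τ n) (z n p)) = 0)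
    (hbdry : ∀ n, 1 ≤ n → ∀ t : ℝ, ‖z n (S n, t)‖ = 1)
    (hE : Tendsto (fun n => floerEnergyFrom H (S n) n (τ n) (z n)) atTop (nhds 0)) :
    ∃ C : ℝ, 0 < C ∧ ∀ n, 1 ≤ n → ∀ p ∈ HalfPlaneFrom (S n),
      ‖pds (HalfPlaneFrom (S n)) (z n) p‖ ≤ C ∧
      ‖pdt (HalfPlaneFrom (S n)) (z n) p‖ ≤ C :=
  uniform_gradient_bounds_general (mod_cast contDiff_infty.1 hH.smooth 2) hH.periodic hH.bdry_const
    (fun n hn ↦ ⟨mod_cast contDiffOn_infty.1 (hz_smooth n hn) 1, hz_disk n hn, hz_per n hn,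
      hfloer n hn, hbdry n hn⟩) hE
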